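/- arXiv:2505.20351 — 10 statements merged into one kernel-verified Lean document; each statement's English description precedes it below -/
import Mathlib

section
/- Let b > 0, μ₁ > 0, μ₂ > 0, and let X₁ ~ Lap(μ₁, b) and X₂ ~ Lap(μ₂, b) be independent. Let a > 0 with a ≠ 1 and suppose μ₁/a ≥ μ₂. Then P(X₁ < a·X₂) = (−1/(2(a+1)(a−1)))·exp((μ₂·a − μ₁)/b) + (a²/(2(a+1)(a−1)))·exp((μ₂ − μ₁/a)/b). -/
open MeasureTheory ProbabilityTheory Filter

/-- The Laplace distribution on `ℝ` with location `μ` and scale `b`,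
given by the density `x ↦ (1/(2b)) * exp (-|x - μ| / b)`. -/
noncomputable def laplaceMeasure (μ b : ℝ) : Measure ℝ :=
  MeasureTheory.volume.withDensity
    fun x => ENNReal.ofReal ((1 / (2 * b)) * Real.exp (-|x - μ| / b))

lemma lap_real (μ b : ℝ) (hb : 0 < b) (s : Set ℝ) (hs : MeasurableSet s) :
    (laplaceMeasure μ b).real s = ∫ x in s, (1 / (2 * b)) * Real.exp (-|x - μ| / b) := by
  rw [integral_eq_lintegral_of_nonneg_ae, Measure.real, laplaceMeasure, withDensity_apply _ hs]
  · exact Eventually.of_forall fun x => by positivity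
  · exact Measurable.aestronglyMeasurable (by fun_prop)

lemma lap_cdf_le (μ b t : ℝ) (hb : 0 < b) (ht : t ≤ μ) :
    (laplaceMeasure μ b).real (Set.Iio t) = 1 / 2 * Real.exp ((t - μ) / b) := by
  rw [lap_real μ b hb _ measurableSet_Iio, ← integral_Iic_eq_integral_Iio]
  have : ∫ x in Set.Iic t, (1 / (2 * b)) * Real.exp (-|x - μ| / b)
      = ∫ x in Set.Iic t, (1 / (2 * b)) * Real.exp (-μ / b) * Real.exp (1 / b * x) := by
    refine setIntegral_congr_fun measurableSet_Iic fun x hx => ?_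
    have hx : x ≤ t := hx
    rw [abs_of_nonpos (by linarith), mul_assoc, ← Real.exp_add]
    congr 2
    ring
  rw [this, integral_const_mul, integral_exp_mul_Iic (by positivity)]
  rw [show (t - μ) / b = -μ / b + 1 / b * t by ring, Real.exp_add]
  field_simp

lemma lap_cdf_ge (μ b t : ℝ) (hb : 0 < b) [IsProbabilityMeasure (laplaceMeasure μ b)]
    (ht : μ ≤ t) :
    (laplaceMeasure μ b).real (Set.Iio t) = 1 - 1 / 2 * Real.exp ((μ - t) / b) := by
  have h := probReal_compl_eq_one_sub (μ := laplaceMeasure μ b) (measurableSet_Ici (a := t))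
  rw [Set.compl_Ici] at h
  rw [h, lap_real μ b hb _ measurableSet_Ici, integral_Ici_eq_integral_Ioi]
  have : ∫ x in Set.Ioi t, (1 / (2 * b)) * Real.exp (-|x - μ| / b)
      = ∫ x in Set.Ioi t, (1 / (2 * b)) * Real.exp (μ / b) * Real.exp (-(1 / b) * x) := by
    refine setIntegral_congr_fun measurableSet_Ioi fun x hx => ?_
    have hx : t < x := hx
    rw [abs_of_nonneg (by linarith), mul_assoc, ← Real.exp_add]
    congr 2
    ring
  rw [this, integral_const_mul, integral_exp_mul_Ioi (by simpa using hb)]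
  rw [show (μ - t) / b = μ / b + -(1 / b) * t by ring, Real.exp_add]
  field_simp

lemma integral_exp_mul_Ioc (c u v : ℝ) (hc : c ≠ 0) (huv : u ≤ v) :
    ∫ x in Set.Ioc u v, Real.exp (c * x) = (Real.exp (c * v) - Real.exp (c * u)) / c := by
  rw [← intervalIntegral.integral_of_le huv,
    intervalIntegral.integral_comp_mul_left (fun x => Real.exp x) hc, integral_exp]
  simp; field_simp

/-- CDF of a ratio of two independent Laplace random variables, case `μ₁/a ≥ μ₂`. -/
theorem laplace_ratio_cdf_of_ge {Ω : Type*} [MeasurableSpace Ω]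
    (P : Measure Ω) [IsProbabilityMeasure P]
    (b μ₁ μ₂ a : ℝ) (hb : 0 < b) (hμ₁ : 0 < μ₁) (hμ₂ : 0 < μ₂)
    (ha : 0 < a) (ha1 : a ≠ 1) (hge : μ₂ ≤ μ₁ / a)
    (X₁ X₂ : Ω → ℝ) (hm₁ : Measurable X₁) (hm₂ : Measurable X₂)
    (hindep : IndepFun X₁ X₂ P)
    (h₁ : Measure.map X₁ P = laplaceMeasure μ₁ b)
    (h₂ : Measure.map X₂ P = laplaceMeasure μ₂ b) :
    (P {ω | X₁ ω < a * X₂ ω}).toReal =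
      (-1 / (2 * (a + 1) * (a - 1))) * Real.exp ((μ₂ * a - μ₁) / b) +
      (a ^ 2 / (2 * (a + 1) * (a - 1))) * Real.exp ((μ₂ - μ₁ / a) / b) := by
  have i1 : IsProbabilityMeasure (laplaceMeasure μ₁ b) := by
    rw [← h₁]; exact Measure.isProbabilityMeasure_map hm₁.aemeasurable
  have i2 : IsProbabilityMeasure (laplaceMeasure μ₂ b) := by
    rw [← h₂]; exact Measure.isProbabilityMeasure_map hm₂.aemeasurable
  have hS : MeasurableSet {p : ℝ × ℝ | p.1 < a * p.2} :=
    measurableSet_lt measurable_fst (by fun_prop)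
  have hprod := (indepFun_iff_map_prod_eq_prod_map_map hm₁.aemeasurable hm₂.aemeasurable).1 hindep
  rw [h₁, h₂] at hprod
  have hP : P {ω | X₁ ω < a * X₂ ω}
      = ∫⁻ y, (laplaceMeasure μ₁ b) (Set.Iio (a * y)) ∂(laplaceMeasure μ₂ b) := by
    have := Measure.map_apply (μ := P) (hm₁.prodMk hm₂) hS
    rw [hprod, Measure.prod_apply_symm hS] at this
    exact this.symm
  have hmF : Measurable fun y : ℝ => (laplaceMeasure μ₁ b) (Set.Iio (a * y)) :=
    measurable_measure_prodMk_right hS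
  have hP2 : (P {ω | X₁ ω < a * X₂ ω}).toReal
      = ∫ y, (1 / (2 * b)) * Real.exp (-|y - μ₂| / b) *
          (laplaceMeasure μ₁ b).real (Set.Iio (a * y)) := by
    rw [hP, ← integral_toReal hmF.aemeasurable (Eventually.of_forall fun y => measure_lt_top _ _)]
    conv_lhs => rw [laplaceMeasure]
    rw [integral_withDensity_eq_integral_toReal_smul (by fun_prop)
      (Eventually.of_forall fun y => ENNReal.ofReal_lt_top)]
    refine integral_congr_ae (Eventually.of_forall fun y => ?_)
    simp only [smul_eq_mul]
    rw [ENNReal.toReal_ofReal (by positivity)]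
    rfl
  rw [hP2]
  set m := μ₁ / a with hm
  have hma : a * m = μ₁ := by rw [hm]; field_simp
  set f : ℝ → ℝ := fun y => (1 / (2 * b)) * Real.exp (-|y - μ₂| / b) *
          (laplaceMeasure μ₁ b).real (Set.Iio (a * y)) with hf
  have e1 : Set.EqOn f (fun y => 1 / (4 * b) * Real.exp ((-μ₂ - μ₁) / b) *
      Real.exp ((1 + a) / b * y)) (Set.Iic μ₂) := by
    intro y hy
    have hy : y ≤ μ₂ := hy
    have : a * y ≤ μ₁ := by rw [← hma]; gcongr; linarith
    simp only [hf]
    rw [lap_cdf_le _ _ _ hb this, abs_of_nonpos (by linarith),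
      show 1 / (2 * b) * Real.exp (- -(y - μ₂) / b) * (1 / 2 * Real.exp ((a * y - μ₁) / b))
        = 1 / (4 * b) * (Real.exp (- -(y - μ₂) / b) * Real.exp ((a * y - μ₁) / b)) by ring,
      mul_assoc, ← Real.exp_add, ← Real.exp_add]
    congr 2
    ring
  have e2 : Set.EqOn f (fun y => 1 / (4 * b) * Real.exp ((μ₂ - μ₁) / b) *
      Real.exp ((a - 1) / b * y)) (Set.Ioc μ₂ m) := by
    intro y hy
    obtain ⟨hy, hy'⟩ := hy
    have : a * y ≤ μ₁ := by rw [← hma]; gcongr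
    simp only [hf]
    rw [lap_cdf_le _ _ _ hb this, abs_of_nonneg (by linarith),
      show 1 / (2 * b) * Real.exp (-(y - μ₂) / b) * (1 / 2 * Real.exp ((a * y - μ₁) / b))
        = 1 / (4 * b) * (Real.exp (-(y - μ₂) / b) * Real.exp ((a * y - μ₁) / b)) by ring,
      mul_assoc, ← Real.exp_add, ← Real.exp_add]
    congr 2
    ring
  have e3 : Set.EqOn f (fun y => 1 / (2 * b) * Real.exp (μ₂ / b) * Real.exp (-(1 / b) * y) -
      1 / (4 * b) * Real.exp ((μ₂ + μ₁) / b) * Real.exp (-((1 + a) / b) * y)) (Set.Ioi m) := by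
    intro y hy
    have hy : m < y := hy
    have : μ₁ ≤ a * y := by rw [← hma]; gcongr
    simp only [hf]
    rw [lap_cdf_ge _ _ _ hb this, abs_of_nonneg (by linarith),
      show 1 / (2 * b) * Real.exp (-(y - μ₂) / b) * (1 - 1 / 2 * Real.exp ((μ₁ - a * y) / b))
        = 1 / (2 * b) * Real.exp (-(y - μ₂) / b) -
          1 / (4 * b) * (Real.exp (-(y - μ₂) / b) * Real.exp ((μ₁ - a * y) / b)) by ring,
      mul_assoc, mul_assoc, ← Real.exp_add, ← Real.exp_add, ← Real.exp_add]
    congr 3 <;> ring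
  have c1 : 0 < (1 + a) / b := by positivity
  have c2 : (a - 1) / b ≠ 0 := div_ne_zero (sub_ne_zero.2 ha1) hb.ne'
  have c3 : -(1 / b) < 0 := by simpa using hb
  have c4 : -((1 + a) / b) < 0 := by linarith
  have j3a : IntegrableOn (fun y => 1 / (2 * b) * Real.exp (μ₂ / b) * Real.exp (-(1 / b) * y))
      (Set.Ioi m) := (integrableOn_exp_mul_Ioi c3 m).const_mul _
  have j3b : IntegrableOn (fun y => 1 / (4 * b) * Real.exp ((μ₂ + μ₁) / b) *
      Real.exp (-((1 + a) / b) * y)) (Set.Ioi m) := (integrableOn_exp_mul_Ioi c4 m).const_mul _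
  have j1 : IntegrableOn f (Set.Iic μ₂) :=
    (integrableOn_congr_fun e1 measurableSet_Iic).2 ((integrableOn_exp_mul_Iic c1 μ₂).const_mul _)
  have j2 : IntegrableOn f (Set.Ioc μ₂ m) :=
    (integrableOn_congr_fun e2 measurableSet_Ioc).2
      ((Continuous.integrableOn_Icc (by fun_prop)).mono_set Set.Ioc_subset_Icc_self)
  have j3 : IntegrableOn f (Set.Ioi m) :=
    (integrableOn_congr_fun e3 measurableSet_Ioi).2 (j3a.sub j3b)
  have hu : Set.Ioc μ₂ m ∪ Set.Ioi m = Set.Ioi μ₂ := Set.Ioc_union_Ioi_eq_Ioi hge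
  have j23 : IntegrableOn f (Set.Ioi μ₂) := hu ▸ j2.union j3
  rw [← intervalIntegral.integral_Iic_add_Ioi j1 j23, ← hu,
    setIntegral_union (Set.Ioc_disjoint_Ioi le_rfl) measurableSet_Ioi j2 j3,
    setIntegral_congr_fun measurableSet_Iic e1, setIntegral_congr_fun measurableSet_Ioc e2,
    setIntegral_congr_fun measurableSet_Ioi e3, integral_sub j3a j3b,
    integral_const_mul, integral_const_mul, integral_const_mul, integral_const_mul,
    integral_exp_mul_Iic c1, integral_exp_mul_Ioc _ _ _ c2 hge, integral_exp_mul_Ioi c3,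
    integral_exp_mul_Ioi c4]
  have q1 : Real.exp ((-μ₂ - μ₁) / b) * Real.exp ((1 + a) / b * μ₂)
      = Real.exp ((μ₂ * a - μ₁) / b) := by
    rw [← Real.exp_add]; congr 1; ring
  have q2 : Real.exp ((μ₂ - μ₁) / b) * Real.exp ((a - 1) / b * μ₂)
      = Real.exp ((μ₂ * a - μ₁) / b) := by
    rw [← Real.exp_add]; congr 1; ring
  have q3 : Real.exp ((μ₂ - μ₁) / b) * Real.exp ((a - 1) / b * m)
      = Real.exp ((μ₂ - m) / b) := by
    rw [← Real.exp_add, ← hma]; congr 1; ring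
  have q4 : Real.exp (μ₂ / b) * Real.exp (-(1 / b) * m)
      = Real.exp ((μ₂ - m) / b) := by
    rw [← Real.exp_add]; congr 1; ring
  have q5 : Real.exp ((μ₂ + μ₁) / b) * Real.exp (-((1 + a) / b) * m)
      = Real.exp ((μ₂ - m) / b) := by
    rw [← Real.exp_add, ← hma]; congr 1; ring
  have hA : a - 1 ≠ 0 := sub_ne_zero.2 ha1
  have hB : a + 1 ≠ 0 := by positivity
  have hB' : 1 + a ≠ 0 := by positivity
  have hb' := hb.ne'
  calc _ = 1 / (4 * b) * (Real.exp ((-μ₂ - μ₁) / b) * Real.exp ((1 + a) / b * μ₂)) / ((1 + a) / b)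
        + (1 / (4 * b) * (Real.exp ((μ₂ - μ₁) / b) * Real.exp ((a - 1) / b * m) -
            Real.exp ((μ₂ - μ₁) / b) * Real.exp ((a - 1) / b * μ₂)) / ((a - 1) / b)
        + (1 / (2 * b) * (Real.exp (μ₂ / b) * Real.exp (-(1 / b) * m)) / (1 / b)
        - 1 / (4 * b) * (Real.exp ((μ₂ + μ₁) / b) * Real.exp (-((1 + a) / b) * m)) /
            ((1 + a) / b))) := by
          rw [neg_div_neg_eq, neg_div_neg_eq]; ring
    _ = _ := by
      rw [q1, q2, q3, q4, q5]
      generalize Real.exp ((μ₂ * a - μ₁) / b) = U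
      generalize Real.exp ((μ₂ - m) / b) = V
      rw [show 1 + a = a + 1 by ring]
      field_simp
      ring
end

section
/- Let b > 0, μ₁ > 0, μ₂ > 0, and let X₁ ~ Lap(μ₁, b) and X₂ ~ Lap(μ₂, b) be independent. Let a > 0 with a ≠ 1 and suppose μ₁/a < μ₂. Then P(X₁ < a·X₂) = 1 + exp((μ₁/a − μ₂)/b)·(a²/(2(a+1)(1−a))) − exp((μ₁ − a·μ₂)/b)·(1/(2(a+1)(1−a))). -/
open MeasureTheory ProbabilityTheory Filter

lemma lap_Iio_eq (μ b t : ℝ) (hb : 0 < b) (ht : t ≤ μ) :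
    laplaceMeasure μ b (Set.Iio t) = ENNReal.ofReal (1 / 2 * Real.exp ((t - μ) / b)) := by
  have hb' : 0 < 1 / b := by positivity
  unfold laplaceMeasure
  rw [withDensity_apply _ measurableSet_Iio]
  have e : ∀ x ∈ Set.Iio t, ENNReal.ofReal ((1 / (2 * b)) * Real.exp (-|x - μ| / b))
      = ENNReal.ofReal ((1 / (2 * b) * Real.exp (-μ / b)) * Real.exp (1 / b * x)) := by
    intro x hx
    have hx : x < t := hx
    rw [abs_of_nonpos (by linarith), mul_assoc, ← Real.exp_add]
    congr 3
    ring
  rw [setLIntegral_congr_fun measurableSet_Iio e, ← ofReal_integral_eq_lintegral_ofReal]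
  · rw [integral_const_mul, ← integral_Iic_eq_integral_Iio, integral_exp_mul_Iic hb']
    congr 1
    rw [show (t - μ) / b = -μ / b + 1 / b * t by ring, Real.exp_add]
    field_simp
  · exact ((integrableOn_exp_mul_Iic hb' t).mono_set Set.Iio_subset_Iic_self).const_mul _
  · exact Eventually.of_forall fun x => by positivity

lemma lap_Ici_eq (μ b t : ℝ) (hb : 0 < b) (ht : μ ≤ t) :
    laplaceMeasure μ b (Set.Ici t) = ENNReal.ofReal (1 / 2 * Real.exp (-(t - μ) / b)) := by
  have hb' : -(1 / b) < 0 := by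
    have : 0 < 1 / b := by positivity
    linarith
  unfold laplaceMeasure
  rw [withDensity_apply _ measurableSet_Ici]
  have e : ∀ x ∈ Set.Ici t, ENNReal.ofReal ((1 / (2 * b)) * Real.exp (-|x - μ| / b))
      = ENNReal.ofReal ((1 / (2 * b) * Real.exp (μ / b)) * Real.exp (-(1 / b) * x)) := by
    intro x hx
    have hx : t ≤ x := hx
    rw [abs_of_nonneg (by linarith), mul_assoc, ← Real.exp_add]
    congr 3
    ring
  rw [setLIntegral_congr_fun measurableSet_Ici e, ← ofReal_integral_eq_lintegral_ofReal]
  · rw [integral_const_mul, integral_Ici_eq_integral_Ioi, integral_exp_mul_Ioi hb']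
    congr 1
    rw [show -(t - μ) / b = μ / b + -(1 / b) * t by ring, Real.exp_add]
    field_simp
  · exact ((integrableOn_Ici_iff_integrableOn_Ioi (by finiteness)).2 (integrableOn_exp_mul_Ioi hb' t)).const_mul _
  · exact Eventually.of_forall fun x => by positivity

/-- Laplace distribution function. -/
noncomputable def lapF (μ b t : ℝ) : ℝ :=
  if t ≤ μ then 1 / 2 * Real.exp ((t - μ) / b) else 1 - 1 / 2 * Real.exp (-(t - μ) / b)

lemma lap_Iio (μ b t : ℝ) (hb : 0 < b) [IsProbabilityMeasure (laplaceMeasure μ b)] :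
    laplaceMeasure μ b (Set.Iio t) = ENNReal.ofReal (lapF μ b t) := by
  unfold lapF
  split_ifs with h
  · exact lap_Iio_eq μ b t hb h
  · rw [← Set.compl_Ici, prob_compl_eq_one_sub measurableSet_Ici,
      lap_Ici_eq μ b t hb (le_of_not_ge h), ENNReal.ofReal_sub _ (by positivity), ENNReal.ofReal_one]

lemma lapF_nonneg (μ b t : ℝ) (hb : 0 < b) : 0 ≤ lapF μ b t := by
  unfold lapF
  split_ifs with h
  · positivity
  · have : Real.exp (-(t - μ) / b) ≤ 1 := by
      rw [Real.exp_le_one_iff]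
      apply div_nonpos_of_nonpos_of_nonneg _ hb.le
      linarith [le_of_not_ge h]
    linarith

lemma int_Ioc_exp (k x y : ℝ) (hk : k ≠ 0) (h : x ≤ y) :
    ∫ t in Set.Ioc x y, Real.exp (k * t) = (Real.exp (k * y) - Real.exp (k * x)) / k := by
  rw [← intervalIntegral.integral_of_le h]
  rw [intervalIntegral.integral_comp_mul_left (fun t => Real.exp t) hk, integral_exp]
  simp only [smul_eq_mul]
  field_simp

lemma intOn_Ioc_exp (k x y : ℝ) :
    IntegrableOn (fun t => Real.exp (k * t)) (Set.Ioc x y) :=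
  (Continuous.integrableOn_Icc (by fun_prop)).mono_set Set.Ioc_subset_Icc_self

lemma main_int (b μ₁ μ₂ a : ℝ) (hb : 0 < b) (ha : 0 < a) (ha1 : a ≠ 1) (hlt : μ₁ / a < μ₂) :
    Integrable (fun y => (1 / (2 * b)) * Real.exp (-|y - μ₂| / b) * lapF μ₁ b (a * y)) ∧
    ∫ y, (1 / (2 * b)) * Real.exp (-|y - μ₂| / b) * lapF μ₁ b (a * y) =
      1 + Real.exp ((μ₁ / a - μ₂) / b) * (a ^ 2 / (2 * (a + 1) * (1 - a))) -
        Real.exp ((μ₁ - a * μ₂) / b) * (1 / (2 * (a + 1) * (1 - a))) := by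
  set g := fun y => (1 / (2 * b)) * Real.exp (-|y - μ₂| / b) * lapF μ₁ b (a * y) with hg
  set m := μ₁ / a with hm
  have hμ : μ₁ = a * m := by rw [hm]; field_simp
  have hiff : ∀ y, a * y ≤ μ₁ ↔ y ≤ m := fun y => by
    rw [hμ]; exact mul_le_mul_iff_right₀ ha
  have hk1 : 0 < (1 + a) / b := by positivity
  have hk2 : 1 / b ≠ 0 := by positivity
  have hk3 : (1 - a) / b ≠ 0 := div_ne_zero (sub_ne_zero.2 ha1.symm) hb.ne'
  have hk4 : -(1 / b) < 0 := by
    have : 0 < 1 / b := by positivity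
    linarith
  have hk5 : -((1 + a) / b) < 0 := by linarith
  have e1 : Set.EqOn (fun y => (1 / (4 * b) * Real.exp ((-a * m - μ₂) / b))
      * Real.exp ((1 + a) / b * y)) g (Set.Iic m) := by
    intro y hy
    have hy : y ≤ m := hy
    simp only [hg, lapF, if_pos ((hiff y).2 hy)]
    rw [abs_of_nonpos (by linarith), hμ, mul_assoc, ← Real.exp_add,
      show (1 / (2 * b)) * Real.exp (-(-(y - μ₂)) / b) * (1 / 2 * Real.exp ((a * y - a * m) / b))
      = 1 / (4 * b) * (Real.exp (-(-(y - μ₂)) / b) * Real.exp ((a * y - a * m) / b)) by ring,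
      ← Real.exp_add]
    congr 2
    ring
  have e2 : Set.EqOn (fun y => (1 / (2 * b) * Real.exp (-μ₂ / b)) * Real.exp (1 / b * y)
      - (1 / (4 * b) * Real.exp ((a * m - μ₂) / b)) * Real.exp ((1 - a) / b * y)) g
      (Set.Ioc m μ₂) := by
    intro y hy
    have hy1 : m < y := hy.1
    have hy2 : y ≤ μ₂ := hy.2
    simp only [hg, lapF, if_neg (fun h => not_le.2 hy1 ((hiff y).1 h))]
    rw [abs_of_nonpos (by linarith), hμ, mul_assoc, ← Real.exp_add, mul_assoc, ← Real.exp_add,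
      show (1 / (2 * b)) * Real.exp (-(-(y - μ₂)) / b) * (1 - 1 / 2 * Real.exp (-(a * y - a * m) / b))
      = 1 / (2 * b) * Real.exp (-(-(y - μ₂)) / b) -
       1 / (4 * b) * (Real.exp (-(-(y - μ₂)) / b) * Real.exp (-(a * y - a * m) / b)) by ring,
      ← Real.exp_add]
    congr 3 <;> ring
  have e3 : Set.EqOn (fun y => (1 / (2 * b) * Real.exp (μ₂ / b)) * Real.exp (-(1 / b) * y)
      - (1 / (4 * b) * Real.exp ((a * m + μ₂) / b)) * Real.exp (-((1 + a) / b) * y)) g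
      (Set.Ioi μ₂) := by
    intro y hy
    have hy2 : μ₂ < y := hy
    have hy1 : m < y := hlt.trans hy2
    simp only [hg, lapF, if_neg (fun h => not_le.2 hy1 ((hiff y).1 h))]
    rw [abs_of_nonneg (by linarith), hμ, mul_assoc, ← Real.exp_add, mul_assoc, ← Real.exp_add,
      show (1 / (2 * b)) * Real.exp (-(y - μ₂) / b) * (1 - 1 / 2 * Real.exp (-(a * y - a * m) / b))
      = 1 / (2 * b) * Real.exp (-(y - μ₂) / b) -
       1 / (4 * b) * (Real.exp (-(y - μ₂) / b) * Real.exp (-(a * y - a * m) / b)) by ring,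
      ← Real.exp_add]
    congr 3 <;> ring
  have j1 := (integrableOn_exp_mul_Iic hk1 m).const_mul (1 / (4 * b) * Real.exp ((-a * m - μ₂) / b))
  have j2a := (intOn_Ioc_exp (1 / b) m μ₂).const_mul (1 / (2 * b) * Real.exp (-μ₂ / b))
  have j2b := (intOn_Ioc_exp ((1 - a) / b) m μ₂).const_mul (1 / (4 * b) * Real.exp ((a * m - μ₂) / b))
  have j3a := (integrableOn_exp_mul_Ioi hk4 μ₂).const_mul (1 / (2 * b) * Real.exp (μ₂ / b))
  have j3b := (integrableOn_exp_mul_Ioi hk5 μ₂).const_mul (1 / (4 * b) * Real.exp ((a * m + μ₂) / b))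
  have i1 : IntegrableOn g (Set.Iic m) := IntegrableOn.congr_fun j1 e1 measurableSet_Iic
  have i2 : IntegrableOn g (Set.Ioc m μ₂) := IntegrableOn.congr_fun (j2a.sub j2b) e2 measurableSet_Ioc
  have i3 : IntegrableOn g (Set.Ioi μ₂) := IntegrableOn.congr_fun (j3a.sub j3b) e3 measurableSet_Ioi
  have i23 : IntegrableOn g (Set.Ioi m) := by
    rw [← Set.Ioc_union_Ioi_eq_Ioi hlt.le]; exact i2.union i3
  have i : Integrable g := by
    rw [← integrableOn_univ, ← Set.Iic_union_Ioi (a := m)]; exact i1.union i23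
  refine ⟨i, ?_⟩
  rw [← setIntegral_univ, ← Set.Iic_union_Ioi (a := m),
    setIntegral_union (Set.Iic_disjoint_Ioi le_rfl) measurableSet_Ioi i1 i23,
    ← Set.Ioc_union_Ioi_eq_Ioi hlt.le,
    setIntegral_union (Set.Ioc_disjoint_Ioi le_rfl) measurableSet_Ioi i2 i3,
    ← setIntegral_congr_fun measurableSet_Iic e1, ← setIntegral_congr_fun measurableSet_Ioc e2,
    ← setIntegral_congr_fun measurableSet_Ioi e3, integral_sub j2a j2b, integral_sub j3a j3b]
  simp only [integral_const_mul]
  rw [integral_exp_mul_Iic hk1, integral_exp_mul_Ioi hk4, integral_exp_mul_Ioi hk5,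
    int_Ioc_exp _ _ _ hk2 hlt.le, int_Ioc_exp _ _ _ hk3 hlt.le]
  set A := Real.exp ((m - μ₂) / b) with hA
  set B := Real.exp ((μ₁ - a * μ₂) / b) with hB
  have p1 : Real.exp ((-a * m - μ₂) / b) * Real.exp ((1 + a) / b * m) = A := by
    rw [← Real.exp_add, hA]; congr 1; ring
  have p2 : Real.exp (-μ₂ / b) * Real.exp (1 / b * μ₂) = 1 := by
    rw [← Real.exp_add, Real.exp_eq_one_iff]; ring
  have p3 : Real.exp (-μ₂ / b) * Real.exp (1 / b * m) = A := by
    rw [← Real.exp_add, hA]; congr 1; ring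
  have p4 : Real.exp ((a * m - μ₂) / b) * Real.exp ((1 - a) / b * μ₂) = B := by
    rw [← Real.exp_add, hB, hμ]; congr 1; ring
  have p5 : Real.exp ((a * m - μ₂) / b) * Real.exp ((1 - a) / b * m) = A := by
    rw [← Real.exp_add, hA]; congr 1; ring
  have p6 : Real.exp (μ₂ / b) * Real.exp (-(1 / b) * μ₂) = 1 := by
    rw [← Real.exp_add, Real.exp_eq_one_iff]; ring
  have p7 : Real.exp ((a * m + μ₂) / b) * Real.exp (-((1 + a) / b) * μ₂) = B := by
    rw [← Real.exp_add, hB, hμ]; congr 1; ring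
  have h1a : 1 - a ≠ 0 := sub_ne_zero.2 ha1.symm
  have h2a : 1 + a ≠ 0 := by positivity
  have h3a : a + 1 ≠ 0 := by positivity
  trans (1 / (4 * b) * A / ((1 + a) / b) + ((1 / (2 * b)) * (1 - A) / (1 / b)
    - 1 / (4 * b) * (B - A) / ((1 - a) / b) + (-(1 / (2 * b) * 1 / (-(1 / b)))
     + 1 / (4 * b) * B / (-((1 + a) / b)))))
  · linear_combination (1 / (4 * b) / ((1 + a) / b)) * p1 + (1 / (2 * b) / (1 / b)) * (p2 - p3)
      - (1 / (4 * b) / ((1 - a) / b)) * (p4 - p5) - (1 / (2 * b) / (-(1 / b))) * p6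
      + (1 / (4 * b) / (-((1 + a) / b))) * p7
  · field_simp
    ring

/-- CDF of a ratio of two independent Laplace random variables, case `μ₁/a < μ₂`. -/
theorem laplace_ratio_cdf_of_lt {Ω : Type*} [MeasurableSpace Ω]
    (P : Measure Ω) [IsProbabilityMeasure P]
    (b μ₁ μ₂ a : ℝ) (hb : 0 < b) (hμ₁ : 0 < μ₁) (hμ₂ : 0 < μ₂)
    (ha : 0 < a) (ha1 : a ≠ 1) (hlt : μ₁ / a < μ₂)
    (X₁ X₂ : Ω → ℝ) (hm₁ : Measurable X₁) (hm₂ : Measurable X₂)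
    (hindep : IndepFun X₁ X₂ P)
    (h₁ : Measure.map X₁ P = laplaceMeasure μ₁ b)
    (h₂ : Measure.map X₂ P = laplaceMeasure μ₂ b) :
    (P {ω | X₁ ω < a * X₂ ω}).toReal =
      1 + Real.exp ((μ₁ / a - μ₂) / b) * (a ^ 2 / (2 * (a + 1) * (1 - a))) -
        Real.exp ((μ₁ - a * μ₂) / b) * (1 / (2 * (a + 1) * (1 - a))) := by
  obtain ⟨hi, hint⟩ := main_int b μ₁ μ₂ a hb ha ha1 hlt
  haveI : IsProbabilityMeasure (laplaceMeasure μ₁ b) := by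
    rw [← h₁]; exact Measure.isProbabilityMeasure_map hm₁.aemeasurable
  haveI : IsProbabilityMeasure (laplaceMeasure μ₂ b) := by
    rw [← h₂]; exact Measure.isProbabilityMeasure_map hm₂.aemeasurable
  have hS : MeasurableSet {p : ℝ × ℝ | p.1 < a * p.2} :=
    measurableSet_lt measurable_fst (measurable_snd.const_mul a)
  have hprod := (indepFun_iff_map_prod_eq_prod_map_map hm₁.aemeasurable hm₂.aemeasurable).1 hindep
  rw [h₁, h₂] at hprod
  have hP : P {ω | X₁ ω < a * X₂ ω} =
      ((laplaceMeasure μ₁ b).prod (laplaceMeasure μ₂ b)) {p : ℝ × ℝ | p.1 < a * p.2} := by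
    rw [← hprod, Measure.map_apply (hm₁.prodMk hm₂) hS]
    rfl
  have hnn : ∀ y, 0 ≤ (1 / (2 * b)) * Real.exp (-|y - μ₂| / b) * lapF μ₁ b (a * y) := fun y =>
    mul_nonneg (by positivity) (lapF_nonneg _ _ _ hb)
  have hslice : ∀ y : ℝ, laplaceMeasure μ₁ b ((fun x => (x, y)) ⁻¹' {p : ℝ × ℝ | p.1 < a * p.2})
      = ENNReal.ofReal (lapF μ₁ b (a * y)) := fun y => lap_Iio μ₁ b (a * y) hb
  have hF : Measurable fun y => ENNReal.ofReal (lapF μ₁ b (a * y)) := by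
    apply Measurable.ennreal_ofReal
    unfold lapF
    refine Measurable.ite (measurableSet_le (by fun_prop) (by fun_prop)) (by fun_prop) (by fun_prop)
  rw [hP, Measure.prod_apply_symm hS]
  simp_rw [hslice]
  rw [laplaceMeasure, lintegral_withDensity_eq_lintegral_mul _ (by fun_prop) hF]
  simp only [Pi.mul_apply]
  rw [lintegral_congr fun y => (ENNReal.ofReal_mul (by positivity)).symm,
    ← ofReal_integral_eq_lintegral_ofReal hi (Eventually.of_forall hnn),
    ENNReal.toReal_ofReal (integral_nonneg hnn), hint]
end

section
/- Fix Z > 0, ε > 0, and α with 0 < α < Z. For each real Y > 0 set X = Z·Y, let L₁, L₂ be independent random variables with L₁, L₂ ~ Lap(2/ε), and set Z̃_Y = (X + L₁)/(Y + L₂). Then lim_{Y → ∞} P(|Z̃_Y − Z| > α) = 0; that is, the ratio of Laplace-noised counts converges in probability to the true ratio Z as the denominator count grows. -/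
open MeasureTheory ProbabilityTheory Filter

/-- **Consistency of the ratio of Laplace-noised counts.**  With `X = Z·Y` and
independent `Lap(2/ε)` noises `L₁ Y, L₂ Y`, the noisy ratio `(X + L₁)/(Y + L₂)` converges
in probability to `Z` as `Y → ∞`. -/
theorem laplaceNoisedCounts_consistent {Ω : Type*} [MeasurableSpace Ω]
    (P : Measure Ω) [IsProbabilityMeasure P]
    (Z ε α : ℝ) (hZ : 0 < Z) (hε : 0 < ε) (hα0 : 0 < α) (hαZ : α < Z)
    (L₁ L₂ : ℝ → Ω → ℝ)
    (hm₁ : ∀ Y, Measurable (L₁ Y)) (hm₂ : ∀ Y, Measurable (L₂ Y))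
    (hindep : ∀ Y, IndepFun (L₁ Y) (L₂ Y) P)
    (hL₁ : ∀ Y, Measure.map (L₁ Y) P = laplaceMeasure 0 (2 / ε))
    (hL₂ : ∀ Y, Measure.map (L₂ Y) P = laplaceMeasure 0 (2 / ε)) :
    Tendsto (fun Y : ℝ => P {ω | α < |(Z * Y + L₁ Y ω) / (Y + L₂ Y ω) - Z|})
      atTop (nhds 0) := by
  have hprob : IsProbabilityMeasure (laplaceMeasure 0 (2 / ε)) := by
    rw [← hL₁ 0]
    exact Measure.isProbabilityMeasure_map (hm₁ 0).aemeasurable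
  obtain ⟨ν, hν⟩ : ∃ ν, ν = laplaceMeasure 0 (2 / ε) := ⟨_, rfl⟩
  rw [← hν] at hL₁ hL₂ hprob
  have hms : ∀ t : ℝ, MeasurableSet {x : ℝ | t < |x|} := fun t =>
    measurableSet_lt measurable_const (by fun_prop)
  have htail : Tendsto (fun t : ℝ => ν {x : ℝ | t < |x|}) atTop (nhds 0) := by
    have h := tendsto_measure_iInter_atTop (μ := ν) (s := fun t : ℝ => {x : ℝ | t < |x|})
      (fun t => (hms t).nullMeasurableSet)
      (fun a b hab x (hx : b < |x|) => lt_of_le_of_lt hab hx) ⟨0, measure_ne_top _ _⟩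
    have he : (⋂ t : ℝ, {x : ℝ | t < |x|}) = ∅ := by
      ext x
      simp only [Set.mem_iInter, Set.mem_ofPred_eq, Set.mem_empty_iff_false, iff_false]
      exact fun hx => lt_irrefl _ (hx |x|)
    rw [he, measure_empty] at h
    exact h
  obtain ⟨c, hc0, hc1, hc2⟩ : ∃ c : ℝ, 0 < c ∧ c ≤ 1 / 2 ∧ c * (1 + Z) ≤ α / 2 := by
    refine ⟨min (1 / 2) (α / 2 / (1 + Z)), by positivity, min_le_left _ _, ?_⟩
    rw [← le_div_iff₀ (by positivity)]
    exact min_le_right _ _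
  have hlim : Tendsto (fun Y : ℝ => ν {x : ℝ | c * Y < |x|} + ν {x : ℝ | c * Y < |x|})
      atTop (nhds 0) := by
    have h := htail.comp (tendsto_id.const_mul_atTop hc0)
    simpa using h.add h
  refine tendsto_of_tendsto_of_tendsto_of_le_of_le' tendsto_const_nhds hlim
    (Eventually.of_forall fun _ => zero_le) ?_
  filter_upwards [eventually_gt_atTop 0] with Y hY
  have e1 : ν {x : ℝ | c * Y < |x|} = P (L₁ Y ⁻¹' {x : ℝ | c * Y < |x|}) := by
    rw [← hL₁ Y, Measure.map_apply (hm₁ Y) (hms _)]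
  have e2 : ν {x : ℝ | c * Y < |x|} = P (L₂ Y ⁻¹' {x : ℝ | c * Y < |x|}) := by
    rw [← hL₂ Y, Measure.map_apply (hm₂ Y) (hms _)]
  calc _ ≤ P (L₁ Y ⁻¹' {x : ℝ | c * Y < |x|} ∪ L₂ Y ⁻¹' {x : ℝ | c * Y < |x|}) := by
        apply measure_mono
        intro ω hω
        by_contra hn
        simp only [Set.mem_union, Set.mem_preimage, Set.mem_ofPred_eq, not_or, not_lt] at hn hω
        obtain ⟨h1, h2⟩ := hn
        have hcY : c * Y ≤ 1 / 2 * Y := mul_le_mul_of_nonneg_right hc1 hY.le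
        have hD : Y / 2 ≤ Y + L₂ Y ω := by linarith [(abs_le.mp h2).1]
        have hDpos : 0 < Y + L₂ Y ω := by linarith
        have hq : (Z * Y + L₁ Y ω) / (Y + L₂ Y ω) - Z
            = (L₁ Y ω - Z * L₂ Y ω) / (Y + L₂ Y ω) := by
          field_simp
          ring
        rw [hq, abs_div, abs_of_pos hDpos, lt_div_iff₀ hDpos] at hω
        have h3 : |L₁ Y ω - Z * L₂ Y ω| ≤ |L₁ Y ω| + Z * |L₂ Y ω| := by
          have := abs_sub (L₁ Y ω) (Z * L₂ Y ω)
          rwa [abs_mul, abs_of_pos hZ] at this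
        have h4 := mul_le_mul_of_nonneg_left h2 hZ.le
        have h5 := mul_le_mul_of_nonneg_right hc2 hY.le
        have h6 := mul_le_mul_of_nonneg_left hD hα0.le
        nlinarith
    _ ≤ P (L₁ Y ⁻¹' {x : ℝ | c * Y < |x|}) + P (L₂ Y ⁻¹' {x : ℝ | c * Y < |x|}) :=
        measure_union_le _ _
    _ = _ := by rw [← e1, ← e2]
end

section
/- Let X, Y be natural numbers with Y ≥ 1, let ε > 0, let L₁, L₂ be independent random variables with L₁, L₂ ~ Lap(2/ε), and set Z̃ = (X + L₁)/max(Y + L₂, 1). Then E[Z̃] = X·( (1/2)·exp(ε·(1 − Y)/2) + (ε/4)·exp(−ε·Y/2)·∫_{ε/2}^{ε·Y/2} (e^t/t) dt − (ε/4)·exp(ε·Y/2)·∫_{−∞}^{−ε·Y/2} (e^t/t) dt ). -/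
open MeasureTheory ProbabilityTheory Filter

lemma lap_dens_integrable {a : ℝ} (ha : 0 < a) :
    Integrable (fun x : ℝ => Real.exp (-a * |x|)) := by
  rw [← integrableOn_univ, ← Set.Iic_union_Ioi (a := (0:ℝ)), integrableOn_union]
  constructor
  · refine (integrableOn_exp_mul_Iic ha 0).congr_fun (fun x hx => ?_) measurableSet_Iic
    have : x ≤ 0 := hx
    simp only [abs_of_nonpos this]; congr 1; ring
  · refine (integrableOn_exp_mul_Ioi (a := -a) (by linarith) 0).congr_fun
      (fun x hx => ?_) measurableSet_Ioi
    have : 0 < x := hx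
    simp only [abs_of_pos this]

lemma lap_mul_integrable {a : ℝ} (ha : 0 < a) :
    Integrable (fun x : ℝ => Real.exp (-a * |x|) * x) := by
  refine ((lap_dens_integrable (half_pos ha)).const_mul (2 / a)).mono'
    (by fun_prop) (Eventually.of_forall fun x => ?_)
  rw [norm_mul, Real.norm_eq_abs, Real.norm_eq_abs, Real.abs_exp]
  have h1 : Real.exp (-a * |x|) = Real.exp (-(a/2) * |x|) * Real.exp (-(a/2 * |x|)) := by
    rw [← Real.exp_add]; congr 1; ring
  have h2 : |x| ≤ 2 / a * Real.exp (a/2 * |x|) := by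
    have := Real.add_one_le_exp (a/2 * |x|)
    rw [div_mul_eq_mul_div, le_div_iff₀ ha]; nlinarith
  rw [h1, Real.exp_neg (a/2 * |x|)]
  have h3 := Real.exp_pos (a/2 * |x|)
  calc _ ≤ Real.exp (-(a/2) * |x|) * (Real.exp (a/2 * |x|))⁻¹ * (2 / a * Real.exp (a/2 * |x|)) := by
        gcongr
    _ = _ := by field_simp

lemma lap_dens_eq (ε : ℝ) (hε : 0 < ε) (x : ℝ) :
    (ENNReal.ofReal ((1 / (2 * (2 / ε))) * Real.exp (-|x - 0| / (2 / ε)))).toReal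
      = ε / 4 * Real.exp (-(ε / 2) * |x|) := by
  rw [ENNReal.toReal_ofReal (by positivity), sub_zero]
  congr 1
  · field_simp; norm_num
  · congr 1; field_simp

lemma lap_integral (ε : ℝ) (hε : 0 < ε) (f : ℝ → ℝ) :
    ∫ x, f x ∂(laplaceMeasure 0 (2 / ε))
      = ∫ x, ε / 4 * Real.exp (-(ε / 2) * |x|) * f x := by
  unfold laplaceMeasure
  rw [integral_withDensity_eq_integral_toReal_smul (by fun_prop)
    (Eventually.of_forall fun x => ENNReal.ofReal_lt_top)]
  simp only [lap_dens_eq ε hε, smul_eq_mul]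

lemma lap_integrable (ε : ℝ) (hε : 0 < ε) :
    Integrable (fun x : ℝ => x) (laplaceMeasure 0 (2 / ε)) := by
  unfold laplaceMeasure
  rw [integrable_withDensity_iff_integrable_smul' (by fun_prop)
    (Eventually.of_forall fun x => ENNReal.ofReal_lt_top)]
  simp only [lap_dens_eq ε hε, smul_eq_mul, mul_assoc]
  exact (lap_mul_integrable (half_pos hε)).const_mul _

lemma lap_mean (ε : ℝ) (hε : 0 < ε) :
    ∫ x, x ∂(laplaceMeasure 0 (2 / ε)) = 0 := by
  rw [lap_integral ε hε]
  have h := integral_neg_eq_self (fun x : ℝ => ε / 4 * Real.exp (-(ε / 2) * |x|) * x) volume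
  simp only [abs_neg, mul_neg, integral_neg] at h
  linarith

lemma lap_inv (ε : ℝ) (hε : 0 < ε) (y : ℝ) (hy : 1 ≤ y) :
    ∫ x, (max (y + x) 1)⁻¹ ∂(laplaceMeasure 0 (2 / ε)) =
      (1 / 2) * Real.exp (ε * (1 - y) / 2) +
        (ε / 4) * Real.exp (-(ε * y) / 2) *
          (∫ t in (ε / 2)..(ε * y / 2), Real.exp t / t) -
        (ε / 4) * Real.exp (ε * y / 2) *
          (∫ t in Set.Iic (-(ε * y) / 2), Real.exp t / t) := by
  rw [lap_integral ε hε]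
  have ha : 0 < ε / 2 := half_pos hε
  have hint : Integrable (fun x : ℝ =>
      ε / 4 * Real.exp (-(ε / 2) * |x|) * (max (y + x) 1)⁻¹) := by
    refine ((lap_dens_integrable ha).const_mul (ε / 4)).mono'
      (by fun_prop) (Eventually.of_forall fun x => ?_)
    have h1 : (1:ℝ) ≤ max (y + x) 1 := le_max_right _ _
    rw [Real.norm_of_nonneg (by positivity)]
    exact mul_le_of_le_one_right (by positivity) (inv_le_one_of_one_le₀ h1)
  rw [← intervalIntegral.integral_Iic_add_Ioi (b := 1 - y) hint.integrableOn hint.integrableOn,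
    ← Set.Ioc_union_Ioi_eq_Ioi (show 1 - y ≤ 0 by linarith),
    setIntegral_union (Set.Ioc_disjoint_Ioi le_rfl) measurableSet_Ioi
      hint.integrableOn hint.integrableOn]
  have e1 : ∫ x in Set.Iic (1 - y), ε / 4 * Real.exp (-(ε / 2) * |x|) * (max (y + x) 1)⁻¹
      = (1 / 2) * Real.exp (ε * (1 - y) / 2) := by
    have : ∫ x in Set.Iic (1 - y), ε / 4 * Real.exp (-(ε / 2) * |x|) * (max (y + x) 1)⁻¹
      = ∫ x in Set.Iic (1 - y), ε / 4 * Real.exp (ε / 2 * x) := by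
      refine setIntegral_congr_fun measurableSet_Iic (fun x hx => ?_)
      have hx : x ≤ 1 - y := hx
      simp only [abs_of_nonpos (show x ≤ 0 by linarith), max_eq_right (show y + x ≤ 1 by linarith),
        inv_one, mul_one, neg_mul_neg]
    rw [this, integral_const_mul, integral_exp_mul_Iic ha,
      show ε / 2 * (1 - y) = ε * (1 - y) / 2 by ring]
    field_simp; norm_num
  have e2 : ∫ x in Set.Ioc (1 - y) 0, ε / 4 * Real.exp (-(ε / 2) * |x|) * (max (y + x) 1)⁻¹
      = (ε / 4) * Real.exp (-(ε * y) / 2) *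
          (∫ t in (ε / 2)..(ε * y / 2), Real.exp t / t) := by
    have h := intervalIntegral.smul_integral_comp_mul_add (a := 1 - y) (b := 0)
      (fun t => Real.exp t / t) (ε / 2) (ε / 2 * y)
    rw [show ε / 2 * (1 - y) + ε / 2 * y = ε / 2 by ring,
      show ε / 2 * 0 + ε / 2 * y = ε * y / 2 by ring] at h
    rw [← h, smul_eq_mul, intervalIntegral.integral_of_le (by linarith), ← integral_const_mul,
      ← integral_const_mul]
    refine setIntegral_congr_fun measurableSet_Ioc (fun x hx => ?_)
    obtain ⟨hx1, hx2⟩ := hx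
    simp only [abs_of_nonpos hx2, max_eq_left (show 1 ≤ y + x by linarith), neg_mul_neg]
    have : 0 < y + x := by linarith
    rw [show ε / 2 * x = -(ε * y) / 2 + (ε / 2 * x + ε / 2 * y) by ring, Real.exp_add,
      show -(ε * y) / 2 + (ε / 2 * x + ε / 2 * y) + ε / 2 * y = ε / 2 * (y + x) by ring,
      show ε / 2 * x + ε / 2 * y = ε / 2 * (y + x) by ring]
    field_simp
  have e3 : ∫ x in Set.Ioi 0, ε / 4 * Real.exp (-(ε / 2) * |x|) * (max (y + x) 1)⁻¹
      = -((ε / 4) * Real.exp (ε * y / 2) *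
          (∫ t in Set.Iic (-(ε * y) / 2), Real.exp t / t)) := by
    have himg : (fun x : ℝ => -(ε / 2 * (y + x))) '' Set.Ioi 0 = Set.Iio (-(ε * y) / 2) := by
      ext t
      simp only [Set.mem_image, Set.mem_Ioi, Set.mem_Iio]
      constructor
      · rintro ⟨x, hx, rfl⟩
        nlinarith
      · intro ht
        refine ⟨-(t + ε / 2 * y) / (ε / 2), div_pos (by linarith) ha, ?_⟩
        field_simp; ring
    have h := integral_image_eq_integral_abs_deriv_smul (s := Set.Ioi (0:ℝ))
      (f := fun x : ℝ => -(ε / 2 * (y + x))) (f' := fun _ => -(ε / 2)) measurableSet_Ioi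
      (fun x _ => by
        have := (((hasDerivAt_id x).const_add y).const_mul (ε / 2)).neg
        simpa using! this.hasDerivWithinAt)
      (fun x _ z _ hxz => by
        have : ε / 2 * (y + x) = ε / 2 * (y + z) := neg_injective hxz
        have := mul_left_cancel₀ ha.ne' this
        linarith)
      (fun t => Real.exp t / t)
    rw [himg] at h
    rw [integral_Iic_eq_integral_Iio, h, ← integral_const_mul, ← integral_neg]
    refine setIntegral_congr_fun measurableSet_Ioi (fun x hx => ?_)
    have hx : 0 < x := hx
    simp only [abs_of_pos hx, max_eq_left (show 1 ≤ y + x by linarith), abs_neg, abs_of_pos ha,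
      smul_eq_mul]
    have : 0 < y + x := by linarith
    rw [show -(ε / 2) * x = ε * y / 2 + -(ε / 2 * (y + x)) by ring, Real.exp_add]
    field_simp
  rw [e1, e2, e3]; ring

/-- **Exact expectation (bias) of the maxed ratio of Laplace-noised counts.**
For counts `X, Y` with `Y ≥ 1` and independent `Lap(2/ε)` noises `L₁, L₂`, the
expectation of `(X + L₁) / max (Y + L₂) 1` equals the stated expression involving
differences of the exponential integral `Ei`. -/
theorem expectation_maxed_ratio_noisedCounts {Ω : Type*} [MeasurableSpace Ω]
    (P : Measure Ω) [IsProbabilityMeasure P]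
    (X Y : ℕ) (hY : 1 ≤ Y) (ε : ℝ) (hε : 0 < ε)
    (L₁ L₂ : Ω → ℝ) (hm₁ : Measurable L₁) (hm₂ : Measurable L₂)
    (hindep : IndepFun L₁ L₂ P)
    (hL₁ : Measure.map L₁ P = laplaceMeasure 0 (2 / ε))
    (hL₂ : Measure.map L₂ P = laplaceMeasure 0 (2 / ε)) :
    ∫ ω, ((X : ℝ) + L₁ ω) / max ((Y : ℝ) + L₂ ω) 1 ∂P =
      (X : ℝ) * ((1 / 2) * Real.exp (ε * (1 - (Y : ℝ)) / 2) +
        (ε / 4) * Real.exp (-(ε * (Y : ℝ)) / 2) *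
          (∫ t in (ε / 2)..(ε * (Y : ℝ) / 2), Real.exp t / t) -
        (ε / 4) * Real.exp (ε * (Y : ℝ) / 2) *
          (∫ t in Set.Iic (-(ε * (Y : ℝ)) / 2), Real.exp t / t)) := by
  have hc : ∫ ω, ((X : ℝ) + L₁ ω) / max ((Y : ℝ) + L₂ ω) 1 ∂P
      = (∫ ω, ((X : ℝ) + L₁ ω) ∂P) * ∫ ω, (max ((Y : ℝ) + L₂ ω) 1)⁻¹ ∂P := by
    simp only [div_eq_mul_inv]
    exact hindep.integral_fun_comp_mul_comp (f := fun x => (X : ℝ) + x)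
      (g := fun x => (max ((Y : ℝ) + x) 1)⁻¹) hm₁.aemeasurable hm₂.aemeasurable
      (by fun_prop) (Measurable.aestronglyMeasurable (by fun_prop))
  have hi : Integrable L₁ P := by
    have := lap_integrable ε hε
    rw [← hL₁] at this
    exact this.comp_measurable hm₁
  have h1 : ∫ ω, ((X : ℝ) + L₁ ω) ∂P = X := by
    have h0 : ∫ ω, L₁ ω ∂P = 0 := by
      rw [← lap_mean ε hε, ← hL₁, integral_map hm₁.aemeasurable (by fun_prop)]
    rw [integral_add (integrable_const _) hi, h0]
    simp
  have h2 : ∫ ω, (max ((Y : ℝ) + L₂ ω) 1)⁻¹ ∂P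
      = ∫ x, (max ((Y : ℝ) + x) 1)⁻¹ ∂(laplaceMeasure 0 (2 / ε)) := by
    rw [← hL₂, integral_map hm₂.aemeasurable (Measurable.aestronglyMeasurable (by fun_prop))]
  rw [hc, h1, h2, lap_inv ε hε Y (by exact_mod_cast hY)]
end

section
/- Fix Z > 0 and ε > 0. For each natural number Y ≥ 1 set X = Z·Y, let L₁, L₂ be independent random variables with L₁, L₂ ~ Lap(2/ε), and set Z̃_Y = (X + L₁)/max(Y + L₂, 1). Then lim_{Y → ∞} E[Z̃_Y] = Z; that is, the bias of the maxed ratio of Laplace-noised counts vanishes as the denominator count grows. -/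
open MeasureTheory ProbabilityTheory Filter

theorem lap_sq_integrable (b : ℝ) (hb : 0 < b) :
    Integrable (fun x : ℝ => x ^ 2) (laplaceMeasure 0 b) := by
  unfold laplaceMeasure
  rw [integrable_withDensity_iff_integrable_smul' (by fun_prop) (by simp)]
  refine (integrable_inv_one_add_sq.const_mul
    ((1 / (2 * b)) * (2 * b ^ 2 + 24 * b ^ 4))).mono' (by fun_prop) ?_
  refine Eventually.of_forall fun x => ?_
  have h0 : 0 ≤ (1 / (2 * b)) * Real.exp (-|x - 0| / b) := by positivity
  rw [ENNReal.toReal_ofReal h0, smul_eq_mul, Real.norm_of_nonneg (by positivity), mul_assoc,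
    mul_assoc]
  refine mul_le_mul_of_nonneg_left ?_ (by positivity)
  rw [sub_zero, neg_div, Real.exp_neg, ← div_eq_mul_inv, inv_mul_eq_div,
    div_le_div_iff₀ (Real.exp_pos _) (by positivity)]
  have ht : 0 ≤ |x| / b := by positivity
  have h2 := Real.pow_div_factorial_le_exp _ ht 2
  have h4 := Real.pow_div_factorial_le_exp _ ht 4
  have e2 : x ^ 2 = b ^ 2 * (|x| / b) ^ 2 := by
    rw [← sq_abs x]; field_simp
  simp only [Nat.factorial] at h2 h4
  norm_num at h2 h4
  have e4 : x ^ 4 = b ^ 4 * (|x| / b) ^ 4 := by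
    rw [show x ^ 4 = (x ^ 2) ^ 2 by ring, e2]; ring
  have k2 : b ^ 2 * (|x| / b) ^ 2 ≤ b ^ 2 * (2 * Real.exp (|x| / b)) :=
    mul_le_mul_of_nonneg_left (by linarith) (by positivity)
  have k4 : b ^ 4 * (|x| / b) ^ 4 ≤ b ^ 4 * (24 * Real.exp (|x| / b)) :=
    mul_le_mul_of_nonneg_left (by linarith) (by positivity)
  rw [← e2] at k2
  rw [← e4] at k4
  nlinarith

theorem ratio_bound (Z y a b : ℝ) (hZ : 0 < Z) (hy : 1 ≤ y) :
    |(Z * y + a) / max (y + b) 1 - Z| ≤ (1 + Z) * (1 + 2 * a ^ 2 + 2 * b ^ 2) / y := by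
  have hM1 : 1 ≤ max (y + b) 1 := le_max_right _ _
  have hd : |max (y + b) 1 - y| ≤ |b| := by
    have := abs_max_sub_max_le_abs (y + b) y 1
    rwa [max_eq_left hy, add_sub_cancel_left] at this
  generalize max (y + b) 1 = M at *
  have hM : 0 < M := by linarith
  have hy0 : 0 < y := by linarith
  have e : (Z * y + a) / M - Z = (a - Z * (M - y)) / M := by field_simp; ring
  rw [e, abs_div, abs_of_pos hM, div_le_div_iff₀ hM hy0]
  have hn : |a - Z * (M - y)| ≤ |a| + Z * |b| := by
    refine (abs_sub _ _).trans ?_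
    rw [abs_mul, abs_of_pos hZ]
    gcongr
  have hyM : y ≤ (1 + |b|) * M := by
    have := neg_abs_le (M - y)
    nlinarith [abs_nonneg b]
  calc |a - Z * (M - y)| * y ≤ (|a| + Z * |b|) * ((1 + |b|) * M) := by gcongr
    _ = ((|a| + Z * |b|) * (1 + |b|)) * M := by ring
    _ ≤ _ := by
      refine mul_le_mul_of_nonneg_right ?_ hM.le
      rw [← sq_abs a, ← sq_abs b]
      have ha := abs_nonneg a
      have hb := abs_nonneg b
      generalize |a| = u at *
      generalize |b| = v at *
      have h1 : u * (1 + v) ≤ 1 + 2 * u ^ 2 + 2 * v ^ 2 := by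
        nlinarith [sq_nonneg (u - v), sq_nonneg (u - 1)]
      have h2 : v * (1 + v) ≤ 1 + 2 * u ^ 2 + 2 * v ^ 2 := by
        nlinarith [sq_nonneg (v - 1)]
      nlinarith [mul_le_mul_of_nonneg_left h2 hZ.le]

/-- **Vanishing bias of the maxed ratio of Laplace-noised counts.**  Fixing the true
ratio `Z > 0` and letting the denominator count `Y → ∞` (with `X = Z·Y`), the expectation
of `(X + L₁) / max (Y + L₂) 1` tends to `Z`. -/
theorem bias_maxed_ratio_noisedCounts_tendsto {Ω : Type*} [MeasurableSpace Ω]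
    (P : Measure Ω) [IsProbabilityMeasure P]
    (Z ε : ℝ) (hZ : 0 < Z) (hε : 0 < ε)
    (L₁ L₂ : ℕ → Ω → ℝ)
    (hm₁ : ∀ Y, Measurable (L₁ Y)) (hm₂ : ∀ Y, Measurable (L₂ Y))
    (hindep : ∀ Y, IndepFun (L₁ Y) (L₂ Y) P)
    (hL₁ : ∀ Y, Measure.map (L₁ Y) P = laplaceMeasure 0 (2 / ε))
    (hL₂ : ∀ Y, Measure.map (L₂ Y) P = laplaceMeasure 0 (2 / ε)) :
    Tendsto
      (fun Y : ℕ => ∫ ω, (Z * (Y : ℝ) + L₁ Y ω) / max ((Y : ℝ) + L₂ Y ω) 1 ∂P)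
      atTop (nhds Z) := by
  have hb : 0 < 2 / ε := by positivity
  have hI := lap_sq_integrable _ hb
  have key : ∀ (L : Ω → ℝ), Measurable L → Measure.map L P = laplaceMeasure 0 (2 / ε) →
      Integrable (fun ω => L ω ^ 2) P ∧
        ∫ ω, L ω ^ 2 ∂P = ∫ x, x ^ 2 ∂(laplaceMeasure 0 (2 / ε)) := by
    intro L hm hL
    rw [← hL] at hI ⊢
    refine ⟨hI.comp_measurable hm, ?_⟩
    rw [integral_map hm.aemeasurable (by fun_prop)]
  set V := ∫ x, x ^ 2 ∂(laplaceMeasure 0 (2 / ε)) with hV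
  rw [tendsto_iff_norm_sub_tendsto_zero]
  refine squeeze_zero' (Eventually.of_forall fun _ => norm_nonneg _) ?_
    (tendsto_const_div_atTop_nhds_zero_nat ((1 + Z) * (1 + 2 * V + 2 * V)))
  filter_upwards [eventually_ge_atTop 1] with Y hY
  have hY' : (1 : ℝ) ≤ Y := by exact_mod_cast hY
  obtain ⟨i1, v1⟩ := key _ (hm₁ Y) (hL₁ Y)
  obtain ⟨i2, v2⟩ := key _ (hm₂ Y) (hL₂ Y)
  have m1 := hm₁ Y
  have m2 := hm₂ Y
  have iS : Integrable (fun ω => 1 + 2 * L₁ Y ω ^ 2) P :=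
    (integrable_const _).add (i1.const_mul 2)
  have iG : Integrable (fun ω => (1 + Z) * (1 + 2 * L₁ Y ω ^ 2 + 2 * L₂ Y ω ^ 2) / Y) P :=
    ((iS.add (i2.const_mul 2)).const_mul (1 + Z)).div_const _
  have iD : Integrable
      (fun ω => (Z * (Y : ℝ) + L₁ Y ω) / max ((Y : ℝ) + L₂ Y ω) 1 - Z) P := by
    refine iG.mono' (Measurable.aestronglyMeasurable (by fun_prop)) ?_
    exact Eventually.of_forall fun ω => ratio_bound Z Y _ _ hZ hY'
  have iF : Integrable
      (fun ω => (Z * (Y : ℝ) + L₁ Y ω) / max ((Y : ℝ) + L₂ Y ω) 1) P := by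
    refine (iD.add (integrable_const Z)).congr (Eventually.of_forall fun ω => ?_)
    simp only [Pi.add_apply, sub_add_cancel]
  have e : ∫ ω, (Z * (Y : ℝ) + L₁ Y ω) / max ((Y : ℝ) + L₂ Y ω) 1 ∂P - Z
      = ∫ ω, ((Z * (Y : ℝ) + L₁ Y ω) / max ((Y : ℝ) + L₂ Y ω) 1 - Z) ∂P := by
    rw [integral_sub iF (integrable_const Z)]; simp
  rw [e]
  refine (norm_integral_le_of_norm_le iG
    (Eventually.of_forall fun ω => ratio_bound Z Y _ _ hZ hY')).trans (le_of_eq ?_)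
  rw [integral_div, integral_const_mul, integral_add iS (i2.const_mul 2),
    integral_add (integrable_const _) (i1.const_mul 2), integral_const_mul, integral_const_mul,
    v1, v2]
  simp
end

section
/- Let p_x, p_y ∈ (0,1) and p = p_x/p_y, and let C > 0. Let n_x(k) and n_y(k) be sequences of positive integers tending to infinity. For each k, let X_k ~ Bin(n_x(k), p_x) and Y_k ~ Bin(n_y(k), p_y), and let L_{x,k}, L_{y,k} be real random variables with mean zero, Var(L_{x,k}) ≤ C·n_x(k) and Var(L_{y,k}) ≤ C·n_y(k), the four variables X_k, Y_k, L_{x,k}, L_{y,k} being mutually independent. Set p̃_{x,k} = (X_k + L_{x,k})/n_x(k), p̃_{y,k} = (Y_k + L_{y,k})/n_y(k), and p̃_k = p̃_{x,k}/p̃_{y,k}. Then p̃_k converges in probability to p as k → ∞. -/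
open MeasureTheory ProbabilityTheory Filter

/-- The binomial distribution `Bin(n, p)` as a measure on `ℝ`
(the law of the number of successes in `n` independent trials with success probability `p`). -/
noncomputable def binomialReal (n : ℕ) (p : ℝ) (hp : p ≤ 1) : Measure ℝ :=
  ((PMF.binomial (Real.toNNReal p) (Real.toNNReal_le_one.mpr hp) n).toMeasure).map
    (fun i : Fin (n + 1) => ((i : ℕ) : ℝ))

lemma binomialReal_second_moment (n : ℕ) (p : ℝ) (h0 : 0 ≤ p) (hp : p ≤ 1) :
    ∫⁻ x, ENNReal.ofReal ((x - n * p) ^ 2) ∂(binomialReal n p hp)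
      = ENNReal.ofReal (n * p * (1 - p)) := by
  unfold binomialReal
  rw [lintegral_map (by fun_prop) (measurable_of_finite _), lintegral_fintype]
  have key := congrArg (Polynomial.eval p) (bernsteinPolynomial.variance ℝ n)
  simp only [Polynomial.eval_finset_sum, bernsteinPolynomial, Polynomial.eval_mul,
    Polynomial.eval_pow, Polynomial.eval_sub, Polynomial.eval_smul, Polynomial.eval_X,
    Polynomial.eval_natCast, Polynomial.eval_one, nsmul_eq_mul] at key
  rw [← key, Finset.sum_range, ENNReal.ofReal_sum_of_nonneg]
  · refine Finset.sum_congr rfl fun i _ => ?_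
    rw [PMF.toMeasure_apply_singleton _ _ (measurableSet_singleton _), PMF.binomial_apply]
    have h1 : (0:ℝ) ≤ 1 - p := by linarith
    have e1 : ENNReal.ofReal (1 - p) = 1 - ENNReal.ofReal p := by
      rw [ENNReal.ofReal_sub _ h0, ENNReal.ofReal_one]
    rw [show (((p.toNNReal : NNReal)) : ENNReal) = ENNReal.ofReal p from rfl, ← e1,
      ← ENNReal.ofReal_pow h0, ← ENNReal.ofReal_pow h1, ← ENNReal.ofReal_natCast,
      ← ENNReal.ofReal_mul (by positivity), ← ENNReal.ofReal_mul (by positivity),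
      ← ENNReal.ofReal_mul (by positivity)]
    congr 1
    simp only [Fin.val_last]
    ring
  · intro i _
    have h1 : (0:ℝ) ≤ 1 - p := by linarith
    positivity

lemma noised_bound {Ω : Type*} [MeasurableSpace Ω]
    (P : Measure Ω) [IsProbabilityMeasure P] (p C : ℝ) (h0 : 0 ≤ p) (hp : p ≤ 1)
    (n : ℕ) (hn : 0 < n) (X L : Ω → ℝ) (hmX : Measurable X)
    (hlaw : Measure.map X P = binomialReal n p hp)
    (hL2 : MemLp L 2 P) (hmean : ∫ ω, L ω ∂P = 0) (hvar : variance L P ≤ C * (n : ℝ))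
    (ε : ℝ) (hε : 0 < ε) :
    P {ω | ε ≤ |(X ω + L ω) / (n : ℝ) - p|}
      ≤ ENNReal.ofReal ((p * (1 - p) / (ε / 2) ^ 2) / n)
        + ENNReal.ofReal ((C / (ε / 2) ^ 2) / n) := by
  have hn' : (0:ℝ) < n := by exact_mod_cast hn
  have hsub : {ω | ε ≤ |(X ω + L ω) / (n : ℝ) - p|} ⊆
      {ω | ENNReal.ofReal ((ε / 2 * n) ^ 2) ≤ ENNReal.ofReal ((X ω - n * p) ^ 2)}
        ∪ {ω | ε / 2 * n ≤ |L ω - ∫ ω, L ω ∂P|} := by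
    intro ω hω
    simp only [Set.mem_union, Set.mem_setOf_eq, hmean, sub_zero] at hω ⊢
    by_contra hcon
    push Not at hcon
    obtain ⟨hA, hB⟩ := hcon
    have hA' : (X ω - n * p) ^ 2 < (ε / 2 * n) ^ 2 := by
      by_contra hc
      exact absurd (ENNReal.ofReal_le_ofReal (not_lt.mp hc)) (not_le.mpr hA)
    have hA'' : |X ω - n * p| < ε / 2 * n := abs_lt_of_sq_lt_sq hA' (by positivity)
    have e : (X ω + L ω) / (n : ℝ) - p = ((X ω - n * p) + L ω) / n := by
      field_simp
      ring
    rw [e, abs_div, abs_of_pos hn', le_div_iff₀ hn'] at hω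
    have := abs_add_le (X ω - n * p) (L ω)
    linarith
  refine (measure_mono hsub).trans ((measure_union_le _ _).trans (add_le_add ?_ ?_))
  · have hpos : (0:ℝ) < (ε / 2 * n) ^ 2 := by positivity
    refine (meas_ge_le_lintegral_div (by fun_prop) (ENNReal.ofReal_pos.mpr hpos).ne'
      ENNReal.ofReal_ne_top).trans ?_
    have : ∫⁻ ω, ENNReal.ofReal ((X ω - n * p) ^ 2) ∂P = ENNReal.ofReal (n * p * (1 - p)) := by
      rw [← binomialReal_second_moment n p h0 hp, ← hlaw, lintegral_map (by fun_prop) hmX]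
    rw [this, ← ENNReal.ofReal_div_of_pos hpos]
    apply ENNReal.ofReal_le_ofReal
    apply le_of_eq
    field_simp
  · refine (meas_ge_le_variance_div_sq hL2 (by positivity)).trans ?_
    apply ENNReal.ofReal_le_ofReal
    calc variance L P / (ε / 2 * n) ^ 2 ≤ C * n / (ε / 2 * n) ^ 2 := by gcongr
      _ = _ := by field_simp

lemma noised_tendsto {Ω : Type*} [MeasurableSpace Ω]
    (P : Measure Ω) [IsProbabilityMeasure P] (p C : ℝ) (h0 : 0 ≤ p) (hp : p ≤ 1)
    (n : ℕ → ℕ) (hn : ∀ k, 0 < n k) (hnT : Tendsto n atTop atTop)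
    (X L : ℕ → Ω → ℝ) (hmX : ∀ k, Measurable (X k))
    (hlaw : ∀ k, Measure.map (X k) P = binomialReal (n k) p hp)
    (hL2 : ∀ k, MemLp (L k) 2 P) (hmean : ∀ k, ∫ ω, L k ω ∂P = 0)
    (hvar : ∀ k, variance (L k) P ≤ C * (n k : ℝ))
    (ε : ℝ) (hε : 0 < ε) :
    Tendsto (fun k => P {ω | ε ≤ |(X k ω + L k ω) / (n k : ℝ) - p|}) atTop (nhds 0) := by
  have hnR : Tendsto (fun k => (n k : ℝ)) atTop atTop :=
    tendsto_natCast_atTop_atTop.comp hnT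
  have hz : ∀ c : ℝ, Tendsto (fun k => ENNReal.ofReal (c / (n k : ℝ))) atTop (nhds 0) := by
    intro c
    simpa using ENNReal.tendsto_ofReal (hnR.const_div_atTop c)
  have hsum := (hz (p * (1 - p) / (ε / 2) ^ 2)).add (hz (C / (ε / 2) ^ 2))
  rw [add_zero] at hsum
  exact tendsto_of_tendsto_of_tendsto_of_le_of_le tendsto_const_nhds hsum
    (fun _ => zero_le) (fun k => noised_bound P p C h0 hp (n k) (hn k) (X k) (L k) (hmX k)
      (hlaw k) (hL2 k) (hmean k) (hvar k) ε hε)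

/-- **Consistency of the noised relative-risk estimator.**  With `X_k ~ Bin(n_x k, p_x)`,
`Y_k ~ Bin(n_y k, p_y)`, zero-mean noises `L_{x,k}, L_{y,k}` with variances `O(n_x k)` and
`O(n_y k)`, all four mutually independent, the noised relative-risk estimator
`p̃_k = ((X_k + L_{x,k})/n_x k) / ((Y_k + L_{y,k})/n_y k)` converges in probability
to `p = p_x / p_y`. -/
theorem noised_relative_risk_consistent {Ω : Type*} [MeasurableSpace Ω]
    (P : Measure Ω) [IsProbabilityMeasure P]
    (px py C : ℝ) (hpx : px ∈ Set.Ioo (0 : ℝ) 1) (hpy : py ∈ Set.Ioo (0 : ℝ) 1) (hC : 0 < C)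
    (nx ny : ℕ → ℕ) (hnx : ∀ k, 0 < nx k) (hny : ∀ k, 0 < ny k)
    (hnxTop : Tendsto nx atTop atTop) (hnyTop : Tendsto ny atTop atTop)
    (X Y Lx Ly : ℕ → Ω → ℝ)
    (hmX : ∀ k, Measurable (X k)) (hmY : ∀ k, Measurable (Y k))
    (hmLx : ∀ k, Measurable (Lx k)) (hmLy : ∀ k, Measurable (Ly k))
    (hlawX : ∀ k, Measure.map (X k) P = binomialReal (nx k) px hpx.2.le)
    (hlawY : ∀ k, Measure.map (Y k) P = binomialReal (ny k) py hpy.2.le)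
    (hLx2 : ∀ k, MemLp (Lx k) 2 P) (hLy2 : ∀ k, MemLp (Ly k) 2 P)
    (hLxMean : ∀ k, ∫ ω, Lx k ω ∂P = 0) (hLyMean : ∀ k, ∫ ω, Ly k ω ∂P = 0)
    (hLxVar : ∀ k, variance (Lx k) P ≤ C * (nx k : ℝ))
    (hLyVar : ∀ k, variance (Ly k) P ≤ C * (ny k : ℝ))
    (hindep : ∀ k, iIndepFun ![X k, Y k, Lx k, Ly k] P) :
    ∀ δ : ℝ, 0 < δ →
      Tendsto
        (fun k => P {ω |
          δ < |((X k ω + Lx k ω) / (nx k : ℝ)) / ((Y k ω + Ly k ω) / (ny k : ℝ)) - px / py|})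
        atTop (nhds 0) := by
  intro δ hδ
  have hcont : ContinuousAt (fun q : ℝ × ℝ => q.1 / q.2) (px, py) :=
    continuousAt_fst.div continuousAt_snd hpy.1.ne'
  obtain ⟨η, hη, hball⟩ := Metric.continuousAt_iff.mp hcont δ hδ
  have h1 := noised_tendsto P px C hpx.1.le hpx.2.le nx hnx hnxTop X Lx hmX hlawX hLx2 hLxMean
    hLxVar η hη
  have h2 := noised_tendsto P py C hpy.1.le hpy.2.le ny hny hnyTop Y Ly hmY hlawY hLy2 hLyMean
    hLyVar η hη
  have hsum := h1.add h2
  rw [add_zero] at hsum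
  refine tendsto_of_tendsto_of_tendsto_of_le_of_le tendsto_const_nhds hsum
    (fun _ => zero_le) (fun k => ?_)
  refine (measure_mono ?_).trans (measure_union_le _ _)
  intro ω hω
  by_contra hcon
  simp only [Set.mem_union, Set.mem_setOf_eq, not_or, not_le] at hcon hω
  have := @hball ((X k ω + Lx k ω) / (nx k : ℝ), (Y k ω + Ly k ω) / (ny k : ℝ)) (by
    rw [Prod.dist_eq, Real.dist_eq, Real.dist_eq]
    exact max_lt hcon.1 hcon.2)
  rw [Real.dist_eq] at this
  exact lt_asymm hω this
end

section
/- Let p_x, p_y ∈ (0,1), p = p_x/p_y, Σ > 0, α ∈ (0,1), and z = Φ⁻¹(1 − α/2). Let n_x(k) and n_y(k) be sequences of positive integers tending to infinity. For each k, let X_k ~ Bin(n_x(k), p_x) and Y_k ~ Bin(n_y(k), p_y), and let L_{x,k}, L_{y,k} be real random variables with mean zero and variance Σ, the four variables being mutually independent. Set X̃_k = X_k + L_{x,k}, Ỹ_k = Y_k + L_{y,k}, p̃_k = (X̃_k/n_x(k))/(Ỹ_k/n_y(k)), and Ṽ_k = p̃_k · √(1/X̃_k − 1/n_x(k) + 1/Ỹ_k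 − 1/n_y(k)). Then P(|p̃_k − p| ≤ z·Ṽ_k) → 1 − α as k → ∞. -/
open MeasureTheory ProbabilityTheory Filter

open scoped Topology

/-- The filter of convergence in probability on pairs `(k, ω)`. -/
def probFilter {Ω : Type*} [MeasurableSpace Ω] (P : Measure Ω) : Filter (ℕ × Ω) where
  sets := {S | Tendsto (fun k => P {ω | (k, ω) ∉ S}) atTop (𝓝 0)}
  univ_sets := by simp
  sets_of_superset := by
    intro S T hS hST
    refine tendsto_of_tendsto_of_tendsto_of_le_of_le tendsto_const_nhds hS (fun _ => zero_le) ?_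
    intro k
    exact measure_mono fun ω h h' => h (hST h')
  inter_sets := by
    intro S T hS hT
    have := Tendsto.add hS hT
    rw [add_zero] at this
    refine tendsto_of_tendsto_of_tendsto_of_le_of_le tendsto_const_nhds this (fun _ => zero_le) ?_
    intro k
    refine le_trans (measure_mono ?_) (measure_union_le _ _)
    intro ω h
    by_contra hc
    simp only [Set.mem_union, Set.mem_ofPred_eq, not_or, not_not] at hc
    exact h hc

lemma mem_probFilter {Ω : Type*} [MeasurableSpace Ω] (P : Measure Ω) (S : Set (ℕ × Ω)) :
    S ∈ probFilter P ↔ Tendsto (fun k => P {ω | (k, ω) ∉ S}) atTop (𝓝 0) := Iff.rfl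

lemma tendstoInMeasure_of_probFilter {Ω : Type*} [MeasurableSpace Ω] {P : Measure Ω}
    {f : ℕ → Ω → ℝ} {c : ℝ}
    (h : Tendsto (fun q : ℕ × Ω => f q.1 q.2) (probFilter P) (𝓝 c)) :
    TendstoInMeasure P f atTop (fun _ => c) := by
  rw [tendstoInMeasure_iff_norm]
  intro ε hε
  have := h (Metric.ball_mem_nhds c hε)
  rw [mem_map, mem_probFilter] at this
  simpa [Real.dist_eq] using this

lemma probFilter_of_dist {Ω Ω' : Type*} [MeasurableSpace Ω] [MeasurableSpace Ω'] {P : Measure Ω}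
    [IsProbabilityMeasure P] {Q : Measure Ω'} [IsProbabilityMeasure Q]
    {f : ℕ → Ω → ℝ} {c : ℝ}
    (h : TendstoInDistribution f atTop (fun _ : Ω' => c) (fun _ => P) Q) :
    Tendsto (fun q : ℕ × Ω => f q.1 q.2) (probFilter P) (𝓝 c) := by
  rw [Metric.nhds_basis_ball.tendsto_right_iff]
  intro ε hε
  have hfr : ∀ x ∈ frontier (Metric.ball c ε)ᶜ, dist x c = ε := by
    intro x hx
    rw [frontier_compl] at hx
    exact Metric.frontier_ball_subset_sphere hx
  have := ProbabilityMeasure.tendsto_measure_of_null_frontier_of_tendsto' h.tendsto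
    (E := (Metric.ball c ε)ᶜ) (by
      simp only [ProbabilityMeasure.coe_mk, Measure.map_const, measure_univ, one_smul]
      rw [Measure.dirac_apply' _ isClosed_frontier.measurableSet, Set.indicator_of_notMem]
      intro hc
      have := hfr c hc
      simp at this
      linarith)
  simp only [ProbabilityMeasure.coe_mk, Measure.map_const, measure_univ, one_smul] at this
  rw [Measure.dirac_apply' _ Metric.isOpen_ball.measurableSet.compl,
    Set.indicator_of_notMem (by simp [hε])] at this
  change _ ∈ probFilter P
  rw [mem_probFilter]
  refine this.congr fun k => ?_
  rw [Measure.map_apply_of_aemeasurable (h.forall_aemeasurable k)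
    Metric.isOpen_ball.measurableSet.compl]
  rfl

lemma charFun_binomialReal (n : ℕ) (p : ℝ) (hp0 : 0 ≤ p) (hp : p ≤ 1) (t : ℝ) :
    charFun (binomialReal n p hp) t = ((1 - p : ℂ) + p * Complex.exp (t * Complex.I)) ^ n := by
  rw [charFun_apply_real, binomialReal, integral_map (by fun_prop) (by fun_prop),
    PMF.integral_eq_sum, add_comm (1 - p : ℂ), add_pow, Finset.sum_range]
  refine Finset.sum_congr rfl fun i _ => ?_
  simp only [PMF.binomial, PMF.ofFintype_apply]
  have h1 : ((1 : NNReal) - p.toNNReal : NNReal) = ((1 - p).toNNReal) := by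
    have hle : p.toNNReal ≤ 1 := Real.toNNReal_le_one.mpr hp
    ext
    rw [NNReal.coe_sub hle, Real.coe_toNNReal _ hp0, Real.coe_toNNReal _ (sub_nonneg.2 hp)]
    simp
  simp [h1, hp0, hp, ← Complex.exp_nat_mul, mul_pow]
  ring_nf

/-- The standardised Bernoulli. -/
lemma binomial_clt {Ω : Type*} [MeasurableSpace Ω] (P : Measure Ω) [IsProbabilityMeasure P]
    (p : ℝ) (hp : p ∈ Set.Ioo (0 : ℝ) 1) (n : ℕ → ℕ) (hn : ∀ k, 0 < n k)
    (hnTop : Tendsto n atTop atTop) (X : ℕ → Ω → ℝ) (hmX : ∀ k, Measurable (X k))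
    (hlawX : ∀ k, Measure.map (X k) P = binomialReal (n k) p hp.2.le) :
    TendstoInDistribution (fun k ω => (X k ω - n k * p) / √(n k * p * (1 - p))) atTop
      (id : ℝ → ℝ) (fun _ => P) (gaussianReal 0 1) where
  forall_aemeasurable k := by have := hmX k; fun_prop
  tendsto := by
    have hp0 := hp.1
    have hp1 : 0 < 1 - p := sub_pos.2 hp.2
    refine ProbabilityMeasure.tendsto_iff_tendsto_charFun.2 fun t => ?_
    set s := √(p * (1 - p)) with hs
    have hs0 : 0 < s := Real.sqrt_pos.2 (mul_pos hp0 hp1)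
    have hs2 : s ^ 2 = p * (1 - p) := Real.sq_sqrt (mul_pos hp0 hp1).le
    let pI : unitInterval := ⟨p, hp.1.le, hp.2.le⟩
    have key := (tendsto_charFun_inv_sqrt_mul_pow (P := bernoulliMeasure (1 : ℝ) 0 pI)
      (X := fun x => (x - p) / s) (by fun_prop)
      (by rw [integral_bernoulliMeasure]; simp [pI]; field_simp; ring)
      (by rw [integral_bernoulliMeasure]; simp [pI, div_pow, hs2]; field_simp; ring) t).comp hnTop
    simp only [Measure.map_id, ProbabilityMeasure.coe_mk]
    have hg : charFun (gaussianReal 0 1) t = Complex.exp (-t ^ 2 / 2) := by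
      simp [charFun_gaussianReal, neg_div]
    rw [hg]
    refine key.congr fun k => ?_
    have hnk : (0 : ℝ) < n k := by exact_mod_cast hn k
    have hsn : 0 < √(n k : ℝ) := Real.sqrt_pos.2 hnk
    have hsq : √(n k * p * (1 - p)) = √(n k : ℝ) * s := by
      rw [mul_assoc, Real.sqrt_mul hnk.le]
    have e1 : (P.map fun ω => (X k ω - n k * p) / √(n k * p * (1 - p))) =
        (binomialReal (n k) p hp.2.le).map (fun x => (√(n k : ℝ) * s)⁻¹ * (x - n k * p)) := by
      rw [← hlawX k, Measure.map_map (by fun_prop) (hmX k), hsq]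
      congr 1
      ext ω
      simp [div_eq_inv_mul]
    have e2 : charFun ((binomialReal (n k) p hp.2.le).map
        (fun x => (√(n k : ℝ) * s)⁻¹ * (x - n k * p))) t
        = charFun (binomialReal (n k) p hp.2.le) ((√(n k : ℝ) * s)⁻¹ * t) *
          Complex.exp (-(n k * p * ((√(n k : ℝ) * s)⁻¹ * t) * Complex.I)) := by
      rw [charFun_apply_real, charFun_apply_real, integral_map (by fun_prop) (by fun_prop),
        ← integral_mul_const]
      congr 1
      ext x
      rw [← Complex.exp_add]
      congr 1
      push_cast
      ring
    have e3 : charFun ((bernoulliMeasure (1 : ℝ) 0 pI).map (fun x => (x - p) / s))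
        ((√(n k : ℝ))⁻¹ * t) =
        ((1 - p : ℂ) + p * Complex.exp ((((√(n k : ℝ) * s)⁻¹ * t : ℝ) : ℂ) * Complex.I)) *
          Complex.exp (-(p * ((√(n k : ℝ) * s)⁻¹ * t) * Complex.I)) := by
      rw [charFun_apply_real, integral_map (by fun_prop) (by fun_prop), integral_bernoulliMeasure]
      simp only [pI, Complex.real_smul]
      rw [add_mul, mul_assoc (p : ℂ) (Complex.exp _), ← Complex.exp_add, add_comm]
      push_cast
      congr 3 <;> ring_nf
    simp only [Function.comp]
    rw [e1, e2, e3, charFun_binomialReal _ _ hp0.le, mul_pow, ← Complex.exp_nat_mul]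
    congr 2
    ring

lemma charFun_scaled {Ω : Type*} [MeasurableSpace Ω] {P : Measure Ω} [IsProbabilityMeasure P]
    {W : ℕ → Ω → ℝ} (hW : TendstoInDistribution W atTop (id : ℝ → ℝ) (fun _ => P)
      (gaussianReal 0 1)) {u : ℕ → ℝ} {c : ℝ} (hu : Tendsto u atTop (𝓝 c)) (t : ℝ) :
    Tendsto (fun k => charFun (P.map (fun ω => u k * W k ω)) t) atTop
      (𝓝 (Complex.exp (-(c * t) ^ 2 / 2))) := by
  have hm : TendstoInMeasure P (fun k _ => u k) atTop (fun _ : Ω => c) := by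
    apply tendstoInMeasure_of_tendsto_ae (by fun_prop)
    exact ae_of_all _ fun _ => hu
  have := hW.continuous_comp_prodMk_of_tendstoInMeasure_const
    (g := fun x : ℝ × ℝ => x.2 * x.1) (by fun_prop) hm (by fun_prop)
  have := ProbabilityMeasure.tendsto_iff_tendsto_charFun.1 this.tendsto t
  simp only [ProbabilityMeasure.coe_mk] at this
  convert this using 2
  rw [charFun_map_mul_comp (by fun_prop)]
  simp [charFun_gaussianReal, neg_div]

lemma combo_clt {Ω : Type*} [MeasurableSpace Ω] {P : Measure Ω} [IsProbabilityMeasure P]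
    {W V : ℕ → Ω → ℝ} (hW : TendstoInDistribution W atTop (id : ℝ → ℝ) (fun _ => P)
      (gaussianReal 0 1)) (hV : TendstoInDistribution V atTop (id : ℝ → ℝ) (fun _ => P)
      (gaussianReal 0 1)) (hind : ∀ k, IndepFun (W k) (V k) P) (c s : ℕ → ℝ)
    (hcs : ∀ k, c k ^ 2 + s k ^ 2 = 1) :
    TendstoInDistribution (fun k ω => c k * W k ω - s k * V k ω) atTop (id : ℝ → ℝ) (fun _ => P)
      (gaussianReal 0 1) where
  forall_aemeasurable k := by
    have := hW.forall_aemeasurable k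
    have := hV.forall_aemeasurable k
    fun_prop
  tendsto := by
    refine ProbabilityMeasure.tendsto_iff_tendsto_charFun.2 fun t => ?_
    simp only [Measure.map_id, ProbabilityMeasure.coe_mk]
    have hg : charFun (gaussianReal 0 1) t = Complex.exp (-t ^ 2 / 2) := by
      simp [charFun_gaussianReal, neg_div]
    rw [hg]
    have hprod : ∀ k, charFun (P.map (fun ω => c k * W k ω - s k * V k ω)) t =
        charFun (P.map (fun ω => c k * W k ω)) t * charFun (P.map (fun ω => (-s k) * V k ω)) t := by
      intro k
      have h1 := hW.forall_aemeasurable k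
      have h2 := hV.forall_aemeasurable k
      have := (hind k).comp (φ := fun x => c k * x) (ψ := fun x => (-s k) * x)
        (by fun_prop) (by fun_prop)
      have := congrFun (this.charFun_map_fun_add_eq_mul (by fun_prop) (by fun_prop)) t
      simpa [sub_eq_add_neg, Function.comp_def] using this
    simp_rw [hprod]
    refine tendsto_of_subseq_tendsto fun ns hns => ?_
    have hmem : ∀ n, (c (ns n), s (ns n)) ∈ Set.Icc (-1 : ℝ) 1 ×ˢ Set.Icc (-1 : ℝ) 1 := by
      intro n
      have := hcs (ns n)
      refine ⟨⟨?_, ?_⟩, ⟨?_, ?_⟩⟩ <;> simp only <;>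
        nlinarith [sq_nonneg (c (ns n)), sq_nonneg (s (ns n))]
    obtain ⟨⟨a, b⟩, -, ms, hms, hlim⟩ := (isCompact_Icc.prod isCompact_Icc).tendsto_subseq hmem
    refine ⟨ms, ?_⟩
    have ha : Tendsto (fun n => c (ns (ms n))) atTop (𝓝 a) := (continuous_fst.tendsto _).comp hlim
    have hb : Tendsto (fun n => s (ns (ms n))) atTop (𝓝 b) := (continuous_snd.tendsto _).comp hlim
    have hab : a ^ 2 + b ^ 2 = 1 := by
      refine tendsto_nhds_unique ((ha.pow 2).add (hb.pow 2)) ?_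
      simp [hcs]
    have hsub := hns.comp hms.tendsto_atTop
    have hW' : TendstoInDistribution (fun n => W (ns (ms n))) atTop (id : ℝ → ℝ) (fun _ => P)
      (gaussianReal 0 1) := ⟨fun n => hW.forall_aemeasurable _, by fun_prop, hW.tendsto.comp hsub⟩
    have hV' : TendstoInDistribution (fun n => V (ns (ms n))) atTop (id : ℝ → ℝ) (fun _ => P)
      (gaussianReal 0 1) := ⟨fun n => hV.forall_aemeasurable _, by fun_prop, hV.tendsto.comp hsub⟩
    have := (charFun_scaled hW' ha t).mul (charFun_scaled hV' hb.neg t)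
    rw [← Complex.exp_add] at this
    convert this using 3
    have : (a : ℂ) ^ 2 + (b : ℂ) ^ 2 = 1 := by exact_mod_cast hab
    push_cast
    linear_combination (t ^ 2 / 2 : ℂ) * this

lemma gaussian_abs (α z : ℝ) (hα : α ∈ Set.Ioo (0 : ℝ) 1)
    (hz : cdf (gaussianReal 0 1) z = 1 - α / 2) :
    (gaussianReal 0 1 {x | |x| ≤ z}).toReal = 1 - α := by
  set μ := gaussianReal 0 1 with hμ
  have h1 : μ.real (Set.Iic z) = 1 - α / 2 := by rw [← cdf_eq_real, hz]
  have h2 : μ.real (Set.Ioi z) = α / 2 := by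
    rw [← Set.compl_Iic, measureReal_compl measurableSet_Iic, h1]; simp
  have h3 : μ.real (Set.Iio (-z)) = α / 2 := by
    have : μ.map (fun x => -x) = μ := by rw [hμ, gaussianReal_map_neg, neg_zero]
    rw [← h2]
    conv_lhs => rw [← this]
    rw [map_measureReal_apply (by fun_prop) measurableSet_Iio]
    congr 1
    ext x
    simp
  have hz0 : 0 ≤ z := by
    by_contra hc
    have : μ.real (Set.Iic z) ≤ μ.real (Set.Iio (-z)) :=
      measureReal_mono (fun x (hx : x ≤ z) => show x < -z by linarith)
    have := hα.2
    linarith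
  have h4 : {x : ℝ | |x| ≤ z} = Set.Iic z \ Set.Iio (-z) := by
    ext x; simp [abs_le, and_comm]
  change μ.real _ = _
  have h5 : Set.Iio (-z) ⊆ Set.Iic z := fun x (hx : x < -z) => show x ≤ z by linarith
  rw [h4, measureReal_sdiff h5 measurableSet_Iio, h1, h3]
  ring

lemma noised_clt {Ω : Type*} [MeasurableSpace Ω] (P : Measure Ω) [IsProbabilityMeasure P]
    (p Sig : ℝ) (hp : p ∈ Set.Ioo (0 : ℝ) 1) (n : ℕ → ℕ) (hn : ∀ k, 0 < n k)
    (hnTop : Tendsto n atTop atTop) (X L : ℕ → Ω → ℝ) (hmX : ∀ k, Measurable (X k))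
    (hmL : ∀ k, Measurable (L k))
    (hlawX : ∀ k, Measure.map (X k) P = binomialReal (n k) p hp.2.le)
    (hL2 : ∀ k, MemLp (L k) 2 P) (hLMean : ∀ k, ∫ ω, L k ω ∂P = 0)
    (hLVar : ∀ k, variance (L k) P = Sig) :
    TendstoInDistribution (fun k ω => (X k ω + L k ω - n k * p) / √(n k * p * (1 - p))) atTop
      (id : ℝ → ℝ) (fun _ => P) (gaussianReal 0 1) := by
  have hpq : 0 < p * (1 - p) := mul_pos hp.1 (sub_pos.2 hp.2)
  have hnR : Tendsto (fun k => (n k : ℝ)) atTop atTop := tendsto_natCast_atTop_atTop.comp hnTop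
  have hm : TendstoInMeasure P (fun k ω => L k ω / √(n k * p * (1 - p))) atTop
      (fun _ => (0 : ℝ)) := by
    rw [tendstoInMeasure_iff_norm]
    intro ε hε
    have hlim : Tendsto (fun k => ENNReal.ofReal (Sig / (ε ^ 2 * (p * (1 - p))) / (n k : ℝ)))
        atTop (𝓝 0) := by
      rw [← ENNReal.ofReal_zero]
      exact ENNReal.tendsto_ofReal (hnR.const_div_atTop _)
    refine tendsto_of_tendsto_of_tendsto_of_le_of_le tendsto_const_nhds hlim
      (fun _ => zero_le) fun k => ?_
    have hnk : (0 : ℝ) < n k := by exact_mod_cast hn k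
    have h0 : 0 < n k * p * (1 - p) := by rw [mul_assoc]; positivity
    have hs : 0 < √(n k * p * (1 - p)) := Real.sqrt_pos.2 h0
    have := meas_ge_le_variance_div_sq (hL2 k) (mul_pos hε hs)
    rw [hLMean k, hLVar k] at this
    have hset : {x | ε ≤ ‖L k x / √(n k * p * (1 - p)) - 0‖} =
        {ω | ε * √(n k * p * (1 - p)) ≤ |L k ω - 0|} := by
      ext ω
      simp only [sub_zero, Set.mem_ofPred_eq]
      rw [Real.norm_eq_abs, abs_div, abs_of_pos hs, le_div_iff₀ hs]
    rw [hset]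
    refine this.trans_eq ?_
    congr 1
    rw [mul_pow, Real.sq_sqrt h0.le]
    field_simp
  have := (binomial_clt P p hp n hn hnTop X hmX hlawX).add_of_tendstoInMeasure_const hm
    (fun k => by have := hmL k; fun_prop)
  convert this using 2
  · ext ω
    simp only [Pi.add_apply]
    ring
  · simp

lemma noised_lln {Ω : Type*} [MeasurableSpace Ω] (P : Measure Ω) [IsProbabilityMeasure P]
    (p : ℝ) (hp : p ∈ Set.Ioo (0 : ℝ) 1) (n : ℕ → ℕ) (hn : ∀ k, 0 < n k)
    (hnTop : Tendsto n atTop atTop) (X : ℕ → Ω → ℝ)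
    (h : TendstoInDistribution (fun k ω => (X k ω - n k * p) / √(n k * p * (1 - p))) atTop
      (id : ℝ → ℝ) (fun _ => P) (gaussianReal 0 1)) :
    Tendsto (fun q : ℕ × Ω => X q.1 q.2 / n q.1) (probFilter P) (𝓝 p) := by
  have hpq : 0 < p * (1 - p) := mul_pos hp.1 (sub_pos.2 hp.2)
  have hnR : Tendsto (fun k => (n k : ℝ)) atTop atTop := tendsto_natCast_atTop_atTop.comp hnTop
  have hc : Tendsto (fun k => √(n k * p * (1 - p)) / n k) atTop (𝓝 0) := by
    have h1 : Tendsto (fun k => √((p * (1 - p)) / n k)) atTop (𝓝 0) := by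
      have := (Real.continuous_sqrt.tendsto 0).comp (hnR.const_div_atTop (p * (1 - p)))
      rwa [Real.sqrt_zero] at this
    refine h1.congr fun k => ?_
    have hnk : (0 : ℝ) < n k := by exact_mod_cast hn k
    rw [eq_div_iff hnk.ne', ← Real.sqrt_sq hnk.le, ← Real.sqrt_mul (by positivity)]
    rw [Real.sqrt_sq hnk.le]
    congr 1
    field_simp
  have hm : TendstoInMeasure P (fun k _ => √(n k * p * (1 - p)) / n k) atTop
      (fun _ : Ω => (0 : ℝ)) := by
    apply tendstoInMeasure_of_tendsto_ae (by fun_prop)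
    exact ae_of_all _ fun _ => hc
  have := h.continuous_comp_prodMk_of_tendstoInMeasure_const
    (g := fun x : ℝ × ℝ => p + x.1 * x.2) (by fun_prop) hm (by fun_prop)
  simp only [mul_zero, add_zero] at this
  refine (probFilter_of_dist this).congr fun q => ?_
  have hnk : (0 : ℝ) < n q.1 := by exact_mod_cast hn q.1
  have h0 : 0 < n q.1 * p * (1 - p) := by rw [mul_assoc]; positivity
  have hs : 0 < √(n q.1 * p * (1 - p)) := Real.sqrt_pos.2 h0
  rw [div_mul_div_cancel₀ hs.ne']
  field_simp
  ring

/-- Variance on the log scale. -/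
noncomputable def lv (p : ℝ) (n : ℕ) : ℝ := (1 - p) / (p * n)

lemma lv_pos {p : ℝ} (hp : p ∈ Set.Ioo (0 : ℝ) 1) {n : ℕ} (hn : 0 < n) : 0 < lv p n := by
  have : (0 : ℝ) < n := by exact_mod_cast hn
  have := hp.1
  have := sub_pos.2 hp.2
  unfold lv
  positivity

lemma lv_std {p : ℝ} (hp : p ∈ Set.Ioo (0 : ℝ) 1) {n : ℕ} (hn : 0 < n) (x : ℝ) :
    √(lv p n) * ((x - n * p) / √(n * p * (1 - p))) = x / n / p - 1 := by
  have hn' : (0 : ℝ) < n := by exact_mod_cast hn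
  have hp0 := hp.1
  have hp1 := sub_pos.2 hp.2
  have h0 : 0 < n * p * (1 - p) := by positivity
  have hs : 0 < √(n * p * (1 - p)) := Real.sqrt_pos.2 h0
  have : √(lv p n) = √(n * p * (1 - p)) / (n * p) := by
    rw [eq_div_iff (by positivity), ← Real.sqrt_sq (show 0 ≤ n * p by positivity),
      ← Real.sqrt_mul (lv_pos hp hn).le, Real.sqrt_sq (show 0 ≤ n * p by positivity), lv]
    congr 1
    field_simp
  rw [this]
  field_simp

lemma lv_est {p : ℝ} (hp : p ∈ Set.Ioo (0 : ℝ) 1) {n : ℕ} (hn : 0 < n) (x : ℝ) :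
    1 / x - 1 / n = lv p n * ((1 / (x / n) - 1) / (1 / p - 1)) := by
  have hn' : (0 : ℝ) < n := by exact_mod_cast hn
  have hp0 := hp.1
  have hp1 := sub_pos.2 hp.2
  have : 1 / p - 1 = (1 - p) / p := by field_simp
  rw [this, lv]
  rcases eq_or_ne x 0 with rfl | hx
  · field_simp
  · field_simp

lemma factor_tendsto {β : Type*} {l : Filter β} {a : β → ℝ} {p : ℝ} (hp : p ∈ Set.Ioo (0 : ℝ) 1)
    (h : Tendsto a l (𝓝 p)) : Tendsto (fun q => (1 / a q - 1) / (1 / p - 1)) l (𝓝 1) := by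
  have hp0 := hp.1
  have hp1 := sub_pos.2 hp.2
  have h1 : 1 / p - 1 = (1 - p) / p := by field_simp
  have h2 : 1 / p - 1 ≠ 0 := by rw [h1]; positivity
  have := ((tendsto_const_nhds (x := (1 : ℝ))).div h hp0.ne').sub_const 1 |>.div_const (1 / p - 1)
  rwa [div_self h2] at this

lemma weighted_tendsto {β : Type*} {l : Filter β} {u v f g : β → ℝ}
    (hu : ∀ q, 0 ≤ u q) (hv : ∀ q, 0 ≤ v q) (huv : ∀ q, u q + v q = 1)
    (hf : Tendsto f l (𝓝 1)) (hg : Tendsto g l (𝓝 1)) :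
    Tendsto (fun q => u q * f q + v q * g q) l (𝓝 1) := by
  have h1 : Tendsto (fun q => |f q - 1| + |g q - 1|) l (𝓝 0) := by
    have := (hf.sub_const 1).abs.add (hg.sub_const 1).abs
    simpa using this
  rw [tendsto_iff_dist_tendsto_zero]
  refine squeeze_zero (fun _ => dist_nonneg) (fun q => ?_) h1
  rw [Real.dist_eq]
  have : u q * f q + v q * g q - 1 = u q * (f q - 1) + v q * (g q - 1) := by
    linear_combination huv q
  rw [this]
  refine (abs_add_le _ _).trans ?_
  rw [abs_mul, abs_mul, abs_of_nonneg (hu q), abs_of_nonneg (hv q)]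
  have h3 := huv q
  have h4 := hu q
  have h5 := hv q
  nlinarith [abs_nonneg (f q - 1), abs_nonneg (g q - 1)]

lemma event_iff {px py a b z σ D : ℝ} (hpx : 0 < px) (hpy : 0 < py) (ha : 0 < a) (hb : 0 < b)
    (hσ : 0 < σ) :
    |a / b - px / py| ≤ z * (a / b * (σ * D)) ↔
      |(a / px - b / py) / σ| - z * (a / px * D) ≤ 0 := by
  have h1 : a / b - px / py = (px * σ / b) * ((a / px - b / py) / σ) := by field_simp
  have h2 : z * (a / b * (σ * D)) = (px * σ / b) * (z * (a / px * D)) := by field_simp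
  have h3 : 0 < px * σ / b := by positivity
  rw [h1, h2, abs_mul, abs_of_pos h3, mul_le_mul_iff_right₀ h3, sub_nonpos]

lemma tendsto_of_tendsto_of_dist' {u v : ℕ → ℝ} {c : ℝ} (hu : Tendsto u atTop (𝓝 c))
    (h : Tendsto (fun k => dist (u k) (v k)) atTop (𝓝 0)) : Tendsto v atTop (𝓝 c) :=
  hu.congr_dist h

lemma abs_measureReal_sub_le {Ω : Type*} [MeasurableSpace Ω] (P : Measure Ω)
    [IsProbabilityMeasure P] {A B C : Set Ω} (h : ∀ ω, ¬ (ω ∈ A ↔ ω ∈ B) → ω ∈ C) :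
    dist (P A).toReal (P B).toReal ≤ (P C).toReal := by
  change |P.real A - P.real B| ≤ P.real C
  have h1 : P.real A ≤ P.real B + P.real C := by
    refine (measureReal_mono (fun ω hω => ?_)).trans (measureReal_union_le B C)
    by_cases hB : ω ∈ B
    · exact Or.inl hB
    · exact Or.inr (h ω (by tauto))
  have h2 : P.real B ≤ P.real A + P.real C := by
    refine (measureReal_mono (fun ω hω => ?_)).trans (measureReal_union_le A C)
    by_cases hB : ω ∈ A
    · exact Or.inl hB
    · exact Or.inr (h ω (by tauto))
  rw [abs_le]
  constructor <;> linarith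

/-- **Asymptotically valid confidence interval for the relative risk from zero-mean-noised
counts** (Theorem: Valid CI for the relative risk).  With `z = Φ⁻¹(1 − α/2)`, the
plug-in normal-approximation interval `p̃_k ± z·Ṽ_k` has asymptotic coverage `1 − α`. -/
theorem relative_risk_CI_valid {Ω : Type*} [MeasurableSpace Ω]
    (P : Measure Ω) [IsProbabilityMeasure P]
    (px py Sig α z : ℝ) (hpx : px ∈ Set.Ioo (0 : ℝ) 1) (hpy : py ∈ Set.Ioo (0 : ℝ) 1)
    (hSig : 0 < Sig) (hα : α ∈ Set.Ioo (0 : ℝ) 1)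
    (hz : cdf (gaussianReal 0 1) z = 1 - α / 2)
    (nx ny : ℕ → ℕ) (hnx : ∀ k, 0 < nx k) (hny : ∀ k, 0 < ny k)
    (hnxTop : Tendsto nx atTop atTop) (hnyTop : Tendsto ny atTop atTop)
    (X Y Lx Ly : ℕ → Ω → ℝ)
    (hmX : ∀ k, Measurable (X k)) (hmY : ∀ k, Measurable (Y k))
    (hmLx : ∀ k, Measurable (Lx k)) (hmLy : ∀ k, Measurable (Ly k))
    (hlawX : ∀ k, Measure.map (X k) P = binomialReal (nx k) px hpx.2.le)
    (hlawY : ∀ k, Measure.map (Y k) P = binomialReal (ny k) py hpy.2.le)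
    (hLx2 : ∀ k, MemLp (Lx k) 2 P) (hLy2 : ∀ k, MemLp (Ly k) 2 P)
    (hLxMean : ∀ k, ∫ ω, Lx k ω ∂P = 0) (hLyMean : ∀ k, ∫ ω, Ly k ω ∂P = 0)
    (hLxVar : ∀ k, variance (Lx k) P = Sig) (hLyVar : ∀ k, variance (Ly k) P = Sig)
    (hindep : ∀ k, iIndepFun ![X k, Y k, Lx k, Ly k] P) :
    Tendsto
      (fun k =>
        (P {ω |
          |((X k ω + Lx k ω) / (nx k : ℝ)) / ((Y k ω + Ly k ω) / (ny k : ℝ)) - px / py| ≤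
            z * (((X k ω + Lx k ω) / (nx k : ℝ)) / ((Y k ω + Ly k ω) / (ny k : ℝ)) *
              Real.sqrt (1 / (X k ω + Lx k ω) - 1 / (nx k : ℝ) +
                1 / (Y k ω + Ly k ω) - 1 / (ny k : ℝ)))}).toReal)
      atTop (nhds (1 - α)) := by
  have hW := noised_clt P px Sig hpx nx hnx hnxTop X Lx hmX hmLx hlawX hLx2 hLxMean hLxVar
  have hV := noised_clt P py Sig hpy ny hny hnyTop Y Ly hmY hmLy hlawY hLy2 hLyMean hLyVar
  have ha := noised_lln P px hpx nx hnx hnxTop (fun k ω => X k ω + Lx k ω) hW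
  have hb := noised_lln P py hpy ny hny hnyTop (fun k ω => Y k ω + Ly k ω) hV
  have hind : ∀ k, IndepFun (fun ω => (X k ω + Lx k ω - nx k * px) / √(nx k * px * (1 - px)))
      (fun ω => (Y k ω + Ly k ω - ny k * py) / √(ny k * py * (1 - py))) P := by
    intro k
    have hm : ∀ i, Measurable (![X k, Y k, Lx k, Ly k] i) := by
      intro i
      fin_cases i
      exacts [hmX k, hmY k, hmLx k, hmLy k]
    have h := (hindep k).indepFun_prodMk_prodMk hm 0 2 1 3 (by decide) (by decide) (by decide)
      (by decide)
    exact h.comp (φ := fun q : ℝ × ℝ => (q.1 + q.2 - nx k * px) / √(nx k * px * (1 - px)))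
      (ψ := fun q : ℝ × ℝ => (q.1 + q.2 - ny k * py) / √(ny k * py * (1 - py)))
      (by fun_prop) (by fun_prop)
  set σ : ℕ → ℝ := fun k => √(lv px (nx k) + lv py (ny k)) with hσdef
  have hvx : ∀ k, 0 < lv px (nx k) := fun k => lv_pos hpx (hnx k)
  have hvy : ∀ k, 0 < lv py (ny k) := fun k => lv_pos hpy (hny k)
  have hσ : ∀ k, 0 < σ k := fun k => Real.sqrt_pos.2 (add_pos (hvx k) (hvy k))
  have hσ2 : ∀ k, σ k ^ 2 = lv px (nx k) + lv py (ny k) :=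
    fun k => Real.sq_sqrt (add_pos (hvx k) (hvy k)).le
  have hN := combo_clt hW hV hind (fun k => √(lv px (nx k)) / σ k)
    (fun k => √(lv py (ny k)) / σ k) (by
      intro k
      have := hσ k
      rw [div_pow, div_pow, Real.sq_sqrt (hvx k).le, Real.sq_sqrt (hvy k).le, hσ2, ← add_div,
        div_self (add_pos (hvx k) (hvy k)).ne'])
  set D : ℕ → Ω → ℝ := fun k ω =>
    √(lv px (nx k) / σ k ^ 2 * ((1 / ((X k ω + Lx k ω) / nx k) - 1) / (1 / px - 1)) +
      lv py (ny k) / σ k ^ 2 * ((1 / ((Y k ω + Ly k ω) / ny k) - 1) / (1 / py - 1))) with hDdef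
  have hD : Tendsto (fun q : ℕ × Ω => D q.1 q.2) (probFilter P) (𝓝 1) := by
    have := weighted_tendsto (l := probFilter P) (u := fun q => lv px (nx q.1) / σ q.1 ^ 2)
      (v := fun q => lv py (ny q.1) / σ q.1 ^ 2)
      (fun q => div_nonneg (hvx _).le (sq_nonneg _)) (fun q => div_nonneg (hvy _).le (sq_nonneg _))
      (fun q => by rw [← add_div, hσ2, div_self (add_pos (hvx _) (hvy _)).ne'])
      (factor_tendsto hpx ha) (factor_tendsto hpy hb)
    have := (Real.continuous_sqrt.tendsto 1).comp this
    rwa [Real.sqrt_one] at this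
  have hR : Tendsto (fun q : ℕ × Ω => (X q.1 q.2 + Lx q.1 q.2) / nx q.1 / px * D q.1 q.2)
      (probFilter P) (𝓝 1) := by
    have := (ha.div_const px).mul hD
    rwa [div_self hpx.1.ne', one_mul] at this
  have hRm := tendstoInMeasure_of_probFilter
    (f := fun k ω => (X k ω + Lx k ω) / nx k / px * D k ω) hR
  have hT := hN.continuous_comp_prodMk_of_tendstoInMeasure_const
    (g := fun x : ℝ × ℝ => |x.1| - z * x.2) (by fun_prop) hRm (by
      intro k
      have := hmX k
      have := hmY k
      have := hmLx k
      have := hmLy k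
      simp only [hDdef]
      fun_prop)
  have hport := ProbabilityMeasure.tendsto_measure_of_null_frontier_of_tendsto' hT.tendsto
    (E := Set.Iic 0) (by
      simp only [ProbabilityMeasure.coe_mk, frontier_Iic, id]
      rw [Measure.map_apply (by fun_prop) (measurableSet_singleton _)]
      have : (fun x : ℝ => |x| - z * 1) ⁻¹' {0} ⊆ {z, -z} := by
        intro x hx
        simp only [Set.mem_preimage, Set.mem_singleton_iff, mul_one, sub_eq_zero] at hx
        exact eq_or_eq_neg_of_abs_eq hx
      refine measure_mono_null this ?_
      have := nullSingletonClass_gaussianReal (μ := 0) (v := 1) one_ne_zero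
      exact (Set.toFinite _).measure_zero _)
  simp only [ProbabilityMeasure.coe_mk] at hport
  rw [Measure.map_apply (by fun_prop) measurableSet_Iic] at hport
  have hlim : (gaussianReal 0 1) ((fun x : ℝ => |id x| - z * 1) ⁻¹' Set.Iic 0) =
      (gaussianReal 0 1) {x | |x| ≤ z} := by
    congr 1
    ext x
    simp
  rw [hlim] at hport
  have hport2 := (ENNReal.tendsto_toReal (measure_ne_top _ _)).comp hport
  rw [gaussian_abs α z hα hz] at hport2
  have hgood : {q : ℕ × Ω | 0 < (X q.1 q.2 + Lx q.1 q.2) / nx q.1 ∧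
      0 < (Y q.1 q.2 + Ly q.1 q.2) / ny q.1} ∈ probFilter P :=
    (ha.eventually_const_lt hpx.1).and (hb.eventually_const_lt hpy.1)
  rw [mem_probFilter] at hgood
  have hgood2 := (ENNReal.tendsto_toReal ENNReal.zero_ne_top).comp hgood
  rw [ENNReal.toReal_zero] at hgood2
  refine tendsto_of_tendsto_of_dist' hport2 ?_
  refine squeeze_zero (fun _ => dist_nonneg) (fun k => ?_) hgood2
  simp only [Function.comp]
  rw [Measure.map_apply_of_aemeasurable (hT.forall_aemeasurable k) measurableSet_Iic]
  have hset : ∀ ω, (0 < (X k ω + Lx k ω) / nx k ∧ 0 < (Y k ω + Ly k ω) / ny k) →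
      ((|√(lv px (nx k)) / σ k * ((X k ω + Lx k ω - nx k * px) / √(nx k * px * (1 - px))) -
        √(lv py (ny k)) / σ k * ((Y k ω + Ly k ω - ny k * py) / √(ny k * py * (1 - py)))| -
          z * ((X k ω + Lx k ω) / nx k / px * D k ω) ≤ 0) ↔
        |((X k ω + Lx k ω) / (nx k : ℝ)) / ((Y k ω + Ly k ω) / (ny k : ℝ)) - px / py| ≤
            z * (((X k ω + Lx k ω) / (nx k : ℝ)) / ((Y k ω + Ly k ω) / (ny k : ℝ)) *
              Real.sqrt (1 / (X k ω + Lx k ω) - 1 / (nx k : ℝ) +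
                1 / (Y k ω + Ly k ω) - 1 / (ny k : ℝ)))) := by
    rintro ω ⟨h1, h2⟩
    have e1 : √(lv px (nx k)) / σ k * ((X k ω + Lx k ω - nx k * px) / √(nx k * px * (1 - px))) -
        √(lv py (ny k)) / σ k * ((Y k ω + Ly k ω - ny k * py) / √(ny k * py * (1 - py))) =
        ((X k ω + Lx k ω) / nx k / px - (Y k ω + Ly k ω) / ny k / py) / σ k := by
      rw [div_mul_eq_mul_div, div_mul_eq_mul_div, lv_std hpx (hnx k), lv_std hpy (hny k)]
      ring
    have e2 : Real.sqrt (1 / (X k ω + Lx k ω) - 1 / (nx k : ℝ) +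
                1 / (Y k ω + Ly k ω) - 1 / (ny k : ℝ)) = σ k * D k ω := by
      rw [add_sub_assoc, lv_est hpx (hnx k), lv_est hpy (hny k)]
      have h0 := hσ k
      simp only [hDdef]
      conv_rhs => rw [← Real.sqrt_sq h0.le]
      rw [← Real.sqrt_mul (sq_nonneg _), Real.sqrt_sq h0.le]
      congr 1
      field_simp
    rw [e1, e2, event_iff hpx.1 hpy.1 h1 h2 (hσ k)]
  refine abs_measureReal_sub_le P (fun ω hω => ?_)
  by_contra hc
  simp only [Set.mem_ofPred_eq, not_not] at hc
  exact hω (hset ω hc)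
end

section
/- Let p_x, p_y ∈ (0,1), p = p_x/p_y, ε > 0, α ∈ (0,1), and z = Φ⁻¹(1 − α/2). Let n_x(k) and n_y(k) be sequences of positive integers tending to infinity. For each k, let X_k ~ Bin(n_x(k), p_x) and Y_k ~ Bin(n_y(k), p_y), and let L_{x,k}, L_{y,k} ~ Lap(2/ε), the four variables being mutually independent. Set X̃_k = X_k + L_{x,k}, Ỹ_k = Y_k + L_{y,k}, p̃_k = (X̃_k/n_x(k))/(Ỹ_k/n_y(k)), and Ṽ_k = p̃_k · √(1/X̃_k − 1/n_x(k) + 1/Ỹ_k − 1/n_y(k)). Then P(|p̃_k − p| ≤ z·Ṽ_k) → 1 − α as k → ∞; that is, the normal-approximation confidence interval built from Laplace-mechanism-noised counts is asymptotically valid. -/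
open MeasureTheory ProbabilityTheory Filter

lemma rr_binom_charFun (n : ℕ) (p : ℝ) (h0 : 0 ≤ p) (hp : p ≤ 1) (t : ℝ) :
    charFun (binomialReal n p hp) t =
      ((1 - p : ℂ) + p * Complex.exp (t * Complex.I)) ^ n := by
  unfold binomialReal
  rw [charFun_apply_real, integral_map (by fun_prop) (by fun_prop), PMF.integral_eq_sum, add_comm (1 - p : ℂ), add_pow,
    Finset.sum_range]
  refine Finset.sum_congr rfl fun i _ => ?_
  have h1 : (1 - (p.toNNReal : ENNReal)).toReal = 1 - p := by
    rw [ENNReal.toReal_sub_of_le]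
    · simp [h0]
    · exact_mod_cast Real.toNNReal_le_one.mpr hp
    · simp
  simp only [PMF.binomial_apply, ENNReal.toReal_mul, ENNReal.toReal_pow, h1, Fin.val_last,
    ENNReal.toReal_natCast, ENNReal.coe_toReal, Real.coe_toNNReal p h0, Complex.real_smul]
  push_cast
  rw [mul_pow, ← Complex.exp_nat_mul]
  ring_nf

lemma rr_clt {Ω : Type*} [MeasurableSpace Ω] (P : Measure Ω) [IsProbabilityMeasure P]
    (p c : ℝ) (hp : p ∈ Set.Ioo (0 : ℝ) 1) (hc : 0 < c) (hc2 : c ^ 2 = p * (1 - p))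
    (n : ℕ → ℕ) (hnTop : Tendsto n atTop atTop)
    (X : ℕ → Ω → ℝ) (hmX : ∀ k, Measurable (X k))
    (hlawX : ∀ k, Measure.map (X k) P = binomialReal (n k) p hp.2.le)
    (t : ℝ) :
    Tendsto (fun k => charFun (P.map (fun ω => (√(n k))⁻¹ * c⁻¹ * (X k ω - n k * p))) t) atTop
      (nhds (charFun (gaussianReal 0 1) t)) := by
  let ν : Measure ℝ := ENNReal.ofReal (1 - p) • Measure.dirac (-p / c) +
    ENNReal.ofReal p • Measure.dirac ((1 - p) / c)
  have h0 := hp.1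
  have h1 := hp.2
  have : IsProbabilityMeasure ν := ⟨by
    simp only [ν, Measure.add_apply, Measure.smul_apply, measure_univ, smul_eq_mul, mul_one]
    rw [← ENNReal.ofReal_add (by linarith) (by linarith)]; simp⟩
  have hIntegR : ∀ f : ℝ → ℝ, ∫ x, f x ∂ν = (1 - p) * f (-p / c) + p * f ((1 - p) / c) := by
    intro f
    rw [integral_add_measure, integral_smul_measure, integral_smul_measure]
    · simp [ENNReal.toReal_ofReal, h0.le, h1.le]
    · exact (integrable_dirac (by simp)).smul_measure (by simp)
    · exact (integrable_dirac (by simp)).smul_measure (by simp)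
  have hIntegC : ∀ f : ℝ → ℂ, ∫ x, f x ∂ν = (1 - p) * f (-p / c) + p * f ((1 - p) / c) := by
    intro f
    rw [integral_add_measure, integral_smul_measure, integral_smul_measure]
    · simp [ENNReal.toReal_ofReal, h0.le, h1.le]
    · exact (integrable_dirac (by simp)).smul_measure (by simp)
    · exact (integrable_dirac (by simp)).smul_measure (by simp)
  have key := tendsto_charFun_inv_sqrt_mul_pow (P := ν) (X := id) (by fun_prop)
    (by rw [hIntegR]; simp; ring)
    (by
      simp only [Pi.pow_apply, id]
      rw [hIntegR]; field_simp; rw [hc2]; ring) t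
  have key2 := key.comp hnTop
  rw [charFun_gaussianReal]
  convert key2 using 2 with k
  · have e : (fun ω => (√(n k))⁻¹ * c⁻¹ * (X k ω - n k * p)) =
      fun ω => ((√(n k))⁻¹ * c⁻¹) * ((fun ω => (X k ω + (- (n k * p)))) ω) := by
        funext ω; ring
    have e2 : P.map (fun ω => X k ω + (-(n k * p))) = (P.map (X k)).map (· + (-(n k * p))) := by
      rw [Measure.map_map (by fun_prop) (hmX k)]; rfl
    rw [e, charFun_map_mul_comp (by have := hmX k; fun_prop), e2, charFun_map_add_const, hlawX,
      rr_binom_charFun _ _ h0.le]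
    simp only [Function.comp, Measure.map_id]
    rw [charFun_apply_real, hIntegC]
    have hcc : (c : ℂ) ≠ 0 := by exact_mod_cast hc.ne'
    have hexp : Complex.exp (((√(n k))⁻¹ * c⁻¹ * t : ℝ) * (-(n k * p) : ℝ) * Complex.I) =
      Complex.exp (((√(n k))⁻¹ * t : ℝ) * (-p / c : ℝ) * Complex.I) ^ (n k) := by
      rw [← Complex.exp_nat_mul]; congr 1; push_cast; field_simp
    have hexp2 : Complex.exp (((√(n k))⁻¹ * t : ℝ) * ((1 - p) / c : ℝ) * Complex.I) =
      Complex.exp (((√(n k))⁻¹ * t : ℝ) * (-p / c : ℝ) * Complex.I) *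
      Complex.exp (((√(n k))⁻¹ * c⁻¹ * t : ℝ) * Complex.I) := by
      rw [← Complex.exp_add]; congr 1; push_cast; field_simp; ring
    rw [hexp2]
    have hin : inner ℝ (-(n k * p)) ((√(n k))⁻¹ * c⁻¹ * t) =
      ((√(n k))⁻¹ * c⁻¹ * t) * (-(n k * p)) := by simp
    rw [hin]
    rw [Complex.ofReal_mul ((√(n k))⁻¹ * c⁻¹ * t), hexp, ← mul_pow]
    congr 1; ring
  · simp [neg_div]

lemma rr_event_iff (px py nx ny A B s Q T z xt yt : ℝ) (hpx : 0 < px) (hpy : 0 < py)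
    (hnx : 0 < nx) (hny : 0 < ny) (hA : 0 < A) (hB : 0 < B) (hs : 0 < s)
    (hx : xt = nx * px * A) (hy : yt = ny * py * B) (hT : A - B = s * T)
    (hQ : 1 / xt - 1 / nx + 1 / yt - 1 / ny = s ^ 2 * Q) :
    (|(xt / nx) / (yt / ny) - px / py| ≤
      z * ((xt / nx) / (yt / ny) * √(1 / xt - 1 / nx + 1 / yt - 1 / ny))) ↔
    |T| - z * (A * √Q) ≤ 0 := by
  rw [hQ, Real.sqrt_mul (by positivity), Real.sqrt_sq hs.le]
  have e1 : (xt / nx) / (yt / ny) - px / py = (px / py / B * s) * T := by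
    have : (xt / nx) / (yt / ny) - px / py = (px / py / B) * (A - B) := by
      rw [hx, hy]; field_simp
    rw [this, hT]; ring
  have e2 : z * ((xt / nx) / (yt / ny) * (s * √Q)) = (px / py / B * s) * (z * (A * √Q)) := by
    rw [hx, hy]; field_simp
  have hpos : 0 < px / py / B * s := by positivity
  rw [e1, e2, abs_mul, abs_of_pos hpos, mul_le_mul_iff_right₀ hpos, sub_nonpos]

/-- joint weak convergence of standardized counts and noises -/
lemma rr_joint {Ω : Type*} [MeasurableSpace Ω] (P : Measure Ω) [IsProbabilityMeasure P]
    (Λ : Measure ℝ) [IsProbabilityMeasure Λ]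
    (U V Lx Ly : ℕ → Ω → ℝ)
    (hmU : ∀ k, Measurable (U k)) (hmV : ∀ k, Measurable (V k))
    (hmLx : ∀ k, Measurable (Lx k)) (hmLy : ∀ k, Measurable (Ly k))
    (hU : ∀ t, Tendsto (fun k => charFun (P.map (U k)) t) atTop
      (nhds (charFun (gaussianReal 0 1) t)))
    (hV : ∀ t, Tendsto (fun k => charFun (P.map (V k)) t) atTop
      (nhds (charFun (gaussianReal 0 1) t)))
    (hlawLx : ∀ k, Measure.map (Lx k) P = Λ) (hlawLy : ∀ k, Measure.map (Ly k) P = Λ)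
    (hi : ∀ k, P.map (fun ω => ((U k ω, V k ω), (Lx k ω, Ly k ω))) =
      ((P.map (U k)).prod (P.map (V k))).prod ((P.map (Lx k)).prod (P.map (Ly k)))) :
    TendstoInDistribution (fun k ω => ((U k ω, V k ω), (Lx k ω, Ly k ω))) atTop
      (id : (ℝ × ℝ) × (ℝ × ℝ) → (ℝ × ℝ) × (ℝ × ℝ)) (fun _ => P)
      (((gaussianReal 0 1).prod (gaussianReal 0 1)).prod (Λ.prod Λ)) where
  forall_aemeasurable k := by
    have := hmU k
    have := hmV k
    have := hmLx k
    have := hmLy k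
    fun_prop
  aemeasurable_limit := by fun_prop
  tendsto := by
    let G : ProbabilityMeasure ℝ := ⟨gaussianReal 0 1, inferInstance⟩
    let L : ProbabilityMeasure ℝ := ⟨Λ, inferInstance⟩
    let μU : ℕ → ProbabilityMeasure ℝ := fun k =>
      ⟨P.map (U k), Measure.isProbabilityMeasure_map (hmU k).aemeasurable⟩
    let μV : ℕ → ProbabilityMeasure ℝ := fun k =>
      ⟨P.map (V k), Measure.isProbabilityMeasure_map (hmV k).aemeasurable⟩
    have tU : Tendsto μU atTop (nhds G) := ProbabilityMeasure.tendsto_iff_tendsto_charFun.2 hU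
    have tV : Tendsto μV atTop (nhds G) := ProbabilityMeasure.tendsto_iff_tendsto_charFun.2 hV
    have t1 : Tendsto (fun k => (μU k).prod (μV k)) atTop (nhds (G.prod G)) :=
      (ProbabilityMeasure.continuous_prod.tendsto (G, G)).comp (tU.prodMk_nhds tV)
    have t2 : Tendsto (fun k => ((μU k).prod (μV k)).prod (L.prod L)) atTop
        (nhds ((G.prod G).prod (L.prod L))) :=
      (ProbabilityMeasure.continuous_prod.tendsto (G.prod G, L.prod L)).comp
        (t1.prodMk_nhds tendsto_const_nhds)
    refine (t2.congr fun k => ?_).trans (le_of_eq ?_)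
    · apply Subtype.ext
      change ((P.map (U k)).prod (P.map (V k))).prod (Λ.prod Λ) = P.map _
      rw [hi k, hlawLx, hlawLy]
    · congr 1
      apply Subtype.ext
      change _ = Measure.map id _
      rw [Measure.map_id]
      rfl

lemma rr_gauss_lin (a b : ℝ) (hab : a ^ 2 + b ^ 2 = 1) (Λ : Measure (ℝ × ℝ))
    [IsProbabilityMeasure Λ] :
    (((gaussianReal 0 1).prod (gaussianReal 0 1)).prod Λ).map
      (fun w : (ℝ × ℝ) × (ℝ × ℝ) => a * w.1.1 - b * w.1.2) = gaussianReal 0 1 := by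
  have e : (fun w : (ℝ × ℝ) × (ℝ × ℝ) => a * w.1.1 - b * w.1.2) =
    (fun v : ℝ × ℝ => a * v.1 + (-b) * v.2) ∘ Prod.fst := by
    funext w; simp; ring
  rw [e, ← Measure.map_map (by fun_prop) (by fun_prop), Measure.map_fst_prod, measure_univ,
    one_smul]
  have hi : IndepFun (fun v : ℝ × ℝ => a * v.1) (fun v : ℝ × ℝ => (-b) * v.2)
      ((gaussianReal 0 1).prod (gaussianReal 0 1)) :=
    indepFun_prod (X := fun x : ℝ => a * x) (Y := fun x : ℝ => (-b) * x) (by fun_prop) (by fun_prop)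
  have hX : ((gaussianReal 0 1).prod (gaussianReal 0 1)).map (fun v : ℝ × ℝ => a * v.1) =
      gaussianReal (a * 0) (.mk (a ^ 2) (sq_nonneg _) * 1) := by
    rw [← gaussianReal_map_const_mul]
    have : (fun v : ℝ × ℝ => a * v.1) = (fun x => a * x) ∘ Prod.fst := rfl
    rw [this, ← Measure.map_map (by fun_prop) (by fun_prop), Measure.map_fst_prod, measure_univ,
      one_smul]
  have hY : ((gaussianReal 0 1).prod (gaussianReal 0 1)).map (fun v : ℝ × ℝ => (-b) * v.2) =
      gaussianReal ((-b) * 0) (.mk ((-b) ^ 2) (sq_nonneg _) * 1) := by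
    rw [← gaussianReal_map_const_mul]
    have : (fun v : ℝ × ℝ => (-b) * v.2) = (fun x => (-b) * x) ∘ Prod.snd := rfl
    rw [this, ← Measure.map_map (by fun_prop) (by fun_prop), Measure.map_snd_prod, measure_univ,
      one_smul]
  have := gaussianReal_add_gaussianReal_of_indepFun hi hX hY
  change Measure.map ((fun v : ℝ × ℝ => a * v.1) + (fun v : ℝ × ℝ => (-b) * v.2)) _ = _
  rw [this]
  congr 1
  · simp
  · ext; push_cast; simp [hab]

lemma rr_gauss_abs (z α : ℝ) (hα : α ∈ Set.Ioo (0 : ℝ) 1)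
    (hz : cdf (gaussianReal 0 1) z = 1 - α / 2) :
    0 < z ∧ (gaussianReal 0 1).real {x | |x| - z ≤ 0} = 1 - α ∧
      gaussianReal 0 1 {x | |x| - z = 0} = 0 := by
  have hna : NullSingletonClass (gaussianReal 0 1) := nullSingletonClass_gaussianReal (by simp)
  have hsym : ∀ y : ℝ, (gaussianReal 0 1).real (Set.Iic (-y)) = 1 - (gaussianReal 0 1).real (Set.Iic y) := by
    intro y
    have h1 : (gaussianReal 0 1).map (fun x => -x) = gaussianReal 0 1 := by
      rw [gaussianReal_map_neg]; simp
    have h2 : (gaussianReal 0 1).real (Set.Iic (-y)) = (gaussianReal 0 1).real (Set.Ici y) := by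
      conv_lhs => rw [← h1]
      rw [map_measureReal_apply (by fun_prop) measurableSet_Iic]
      congr 1; ext x; simp
    rw [h2, measureReal_congr (Ioi_ae_eq_Ici.symm), ← Set.compl_Iic,
      probReal_compl_eq_one_sub measurableSet_Iic]
  have hz' : (gaussianReal 0 1).real (Set.Iic z) = 1 - α / 2 := by rw [← cdf_eq_real, hz]
  have hpos : 0 < z := by
    by_contra hcon
    push Not at hcon
    have h1 := hsym z
    have h2 : (gaussianReal 0 1).real (Set.Iic z) ≤ (gaussianReal 0 1).real (Set.Iic (-z)) :=
      measureReal_mono (Set.Iic_subset_Iic.2 (by linarith))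
    have := hα.2
    linarith
  refine ⟨hpos, ?_, ?_⟩
  · have e : {x : ℝ | |x| - z ≤ 0} = Set.Icc (-z) z := by
      ext x; simp [abs_le]
    have e3 : Set.Ioc (-z) z = Set.Iic z \ Set.Iic (-z) := by ext x; simp [and_comm]
    rw [e, measureReal_congr (Ioc_ae_eq_Icc.symm), e3,
      measureReal_sdiff (Set.Iic_subset_Iic.2 (by linarith)) measurableSet_Iic, hsym, hz']
    ring
  · refine measure_mono_null (t := {z, -z}) ?_ ?_
    · intro x hx
      have : |x| = z := by simpa [sub_eq_zero] using hx
      rcases abs_choice x with h | h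
      · left; linarith
      · right; simp; linarith
    · exact (Set.toFinite _).measure_zero _

lemma rr_portmanteau {Ω Ω' : Type*} [MeasurableSpace Ω] [MeasurableSpace Ω'] (P : Measure Ω)
    [IsProbabilityMeasure P] (M : Measure Ω') [IsProbabilityMeasure M]
    (D : ℕ → Ω → ℝ) (Z : Ω' → ℝ) (h : TendstoInDistribution D atTop Z (fun _ => P) M)
    (hm : ∀ k, Measurable (D k)) (hZ : Measurable Z) (c : ℝ)
    (h0 : M {w | Z w = c} = 0) :
    Tendsto (fun k => P.real {ω | D k ω ≤ c}) atTop (nhds (M.real {w | Z w ≤ c})) := by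
  have := ProbabilityMeasure.tendsto_measure_of_null_frontier_of_tendsto' h.tendsto
    (E := Set.Iic c) (by
      simp only [frontier_Iic, ProbabilityMeasure.coe_mk]
      rw [Measure.map_apply hZ (measurableSet_singleton c)]
      exact h0)
  have h2 := (ENNReal.tendsto_toReal (by
    have := Measure.isProbabilityMeasure_map (μ := M) hZ.aemeasurable
    exact measure_ne_top (M.map Z) _)).comp this
  simp only [ProbabilityMeasure.coe_mk, Function.comp_def] at h2
  rw [Measure.map_apply hZ measurableSet_Iic] at h2
  refine (h2.congr fun k => ?_)
  rw [Measure.map_apply (hm k) measurableSet_Iic]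
  rfl

/-- relative estimate as a function of the standardized count, the noise and `1/√n` -/
noncomputable def rrA (p c u l d : ℝ) : ℝ := 1 + c / p * d * u + d ^ 2 * l / p

noncomputable def rrQ (px py A B a b : ℝ) : ℝ :=
  a ^ 2 * (px / (1 - px)) * (1 / (px * max A (1 / 2)) - 1) +
    b ^ 2 * (py / (1 - py)) * (1 / (py * max B (1 / 2)) - 1)

noncomputable def rrD (px py cx cy z : ℝ) (w : ((ℝ × ℝ) × (ℝ × ℝ)) × ((ℝ × ℝ) × (ℝ × ℝ))) : ℝ :=
  |w.2.1.1 * w.1.1.1 + w.2.1.1 * w.2.2.1 * w.1.2.1 / cx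
    - w.2.1.2 * w.1.1.2 - w.2.1.2 * w.2.2.2 * w.1.2.2 / cy|
  - z * (rrA px cx w.1.1.1 w.1.2.1 w.2.2.1 *
    √(rrQ px py (rrA px cx w.1.1.1 w.1.2.1 w.2.2.1) (rrA py cy w.1.1.2 w.1.2.2 w.2.2.2)
      w.2.1.1 w.2.1.2))

lemma rrD_continuous (px py cx cy z : ℝ) (hpx : 0 < px) (hpy : 0 < py) :
    Continuous (rrD px py cx cy z) := by
  have h1 : ∀ A : ℝ, px * max A (1 / 2) ≠ 0 := fun A =>
    (mul_pos hpx (lt_max_of_lt_right (by norm_num))).ne'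
  have h2 : ∀ A : ℝ, py * max A (1 / 2) ≠ 0 := fun A =>
    (mul_pos hpy (lt_max_of_lt_right (by norm_num))).ne'
  unfold rrD rrQ rrA
  fun_prop (disch := first | exact h1 _ | exact h2 _ | (intro x; exact h1 _) | (intro x; exact h2 _))

lemma rr_core {Ω : Type*} [MeasurableSpace Ω] (P : Measure Ω) [IsProbabilityMeasure P]
    (Λ : Measure ℝ) [IsProbabilityMeasure Λ]
    (U V Lx Ly : ℕ → Ω → ℝ)
    (hmU : ∀ k, Measurable (U k)) (hmV : ∀ k, Measurable (V k))
    (hmLx : ∀ k, Measurable (Lx k)) (hmLy : ∀ k, Measurable (Ly k))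
    (hJ : TendstoInDistribution (fun k ω => ((U k ω, V k ω), (Lx k ω, Ly k ω))) atTop
      (id : (ℝ × ℝ) × (ℝ × ℝ) → (ℝ × ℝ) × (ℝ × ℝ)) (fun _ => P)
      (((gaussianReal 0 1).prod (gaussianReal 0 1)).prod (Λ.prod Λ)))
    (px py cx cy z α : ℝ) (hpx : px ∈ Set.Ioo (0 : ℝ) 1) (hpy : py ∈ Set.Ioo (0 : ℝ) 1)
    (hα : α ∈ Set.Ioo (0 : ℝ) 1) (hz : cdf (gaussianReal 0 1) z = 1 - α / 2)
    (a b d e : ℕ → ℝ) (a0 b0 : ℝ) (hab : ∀ k, a k ^ 2 + b k ^ 2 = 1)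
    (ha : Tendsto a atTop (nhds a0)) (hb : Tendsto b atTop (nhds b0))
    (hd : Tendsto d atTop (nhds 0)) (he : Tendsto e atTop (nhds 0))
    (S : ℕ → Set Ω)
    (hS : ∀ k ω, 1 / 2 < rrA px cx (U k ω) (Lx k ω) (d k) →
      1 / 2 < rrA py cy (V k ω) (Ly k ω) (e k) →
      (ω ∈ S k ↔
        rrD px py cx cy z (((U k ω, V k ω), (Lx k ω, Ly k ω)), ((a k, b k), (d k, e k))) ≤ 0)) :
    Tendsto (fun k => P.real (S k)) atTop (nhds (1 - α)) := by
  obtain ⟨hz0, hzα, hznull⟩ := rr_gauss_abs z α hα hz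
  have hab0 : a0 ^ 2 + b0 ^ 2 = 1 :=
    tendsto_nhds_unique ((ha.pow 2).add (hb.pow 2)) (by simp [hab])
  set M := ((gaussianReal 0 1).prod (gaussianReal 0 1)).prod (Λ.prod Λ) with hM
  have hpar : Tendsto (fun k => ((a k, b k), (d k, e k))) atTop (nhds ((a0, b0), ((0 : ℝ), (0 : ℝ)))) :=
    (ha.prodMk_nhds hb).prodMk_nhds (hd.prodMk_nhds he)
  have hparM : TendstoInMeasure P (fun k (_ : Ω) => ((a k, b k), (d k, e k))) atTop
      (fun _ => ((a0, b0), ((0 : ℝ), (0 : ℝ)))) :=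
    tendstoInMeasure_of_tendsto_ae (fun _ => aestronglyMeasurable_const)
      (Filter.Eventually.of_forall fun _ => hpar)
  have hcomp : ∀ g : ((ℝ × ℝ) × (ℝ × ℝ)) × ((ℝ × ℝ) × (ℝ × ℝ)) → ℝ, Continuous g →
      TendstoInDistribution (fun k ω => g (((U k ω, V k ω), (Lx k ω, Ly k ω)), ((a k, b k), (d k, e k))))
        atTop (fun w => g (w, ((a0, b0), ((0 : ℝ), (0 : ℝ))))) (fun _ => P) M := fun g hg =>
    hJ.continuous_comp_prodMk_of_tendstoInMeasure_const hg hparM (fun _ => by fun_prop)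
  have hport : ∀ g : ((ℝ × ℝ) × (ℝ × ℝ)) × ((ℝ × ℝ) × (ℝ × ℝ)) → ℝ, Continuous g → ∀ c : ℝ,
      M {w | g (w, ((a0, b0), ((0 : ℝ), (0 : ℝ)))) = c} = 0 →
      Tendsto (fun k => P.real {ω | g (((U k ω, V k ω), (Lx k ω, Ly k ω)), ((a k, b k), (d k, e k))) ≤ c})
        atTop (nhds (M.real {w | g (w, ((a0, b0), ((0 : ℝ), (0 : ℝ)))) ≤ c})) := by
    intro g hg c h0
    refine rr_portmanteau P M _ _ (hcomp g hg) (fun k => ?_) ?_ c h0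
    · have := hmU k
      have := hmV k
      have := hmLx k
      have := hmLy k
      have := hg.measurable
      fun_prop
    · have := hg.measurable
      fun_prop
  have hlin := rr_gauss_lin a0 b0 hab0 (Λ.prod Λ)
  rw [← hM] at hlin
  have hlim : ∀ w, rrD px py cx cy z (w, ((a0, b0), ((0 : ℝ), (0 : ℝ)))) =
      |a0 * w.1.1 - b0 * w.1.2| - z := by
    intro w
    have h1 : (0:ℝ) < 1 - px := by linarith [hpx.2]
    have h2 : (0:ℝ) < 1 - py := by linarith [hpy.2]
    have h3 := hpx.1
    have h4 := hpy.1
    have hq : rrQ px py 1 1 a0 b0 = 1 := by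
      have hq' : rrQ px py 1 1 a0 b0 = a0 ^ 2 + b0 ^ 2 := by
        rw [rrQ, max_eq_left (by norm_num)]; field_simp
      rw [hq', hab0]
    have hA : ∀ p c u l : ℝ, rrA p c u l 0 = 1 := by intro p c u l; simp [rrA]
    simp [rrD, hA, hq]
  have t1 := hport _ (rrD_continuous px py cx cy z hpx.1 hpy.1) 0 (by
    simp only [hlim]
    rw [← hlin, Measure.map_apply (by fun_prop) (by measurability)] at hznull
    exact hznull)
  have e1 : M.real {w | rrD px py cx cy z (w, ((a0, b0), ((0 : ℝ), (0 : ℝ)))) ≤ 0} = 1 - α := by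
    simp only [hlim]
    rw [← hlin, map_measureReal_apply (by fun_prop)
      (measurableSet_le (by fun_prop) (by fun_prop))] at hzα
    exact hzα
  rw [e1] at t1
  have t2 := hport (fun w => rrA px cx w.1.1.1 w.1.2.1 w.2.2.1) (by unfold rrA; fun_prop) (1/2)
    (by simp only [rrA]; norm_num)
  have t3 := hport (fun w => rrA py cy w.1.1.2 w.1.2.2 w.2.2.2) (by unfold rrA; fun_prop) (1/2)
    (by simp only [rrA]; norm_num)
  have e2 : M.real {w | rrA px cx w.1.1 w.2.1 0 ≤ 1 / 2} = 0 := by simp only [rrA]; norm_num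
  have e3 : M.real {w | rrA py cy w.1.2 w.2.2 0 ≤ 1 / 2} = 0 := by simp only [rrA]; norm_num
  simp only at t2 t3
  rw [e2] at t2
  rw [e3] at t3
  have tlo := (t1.sub t2).sub t3
  have thi := (t1.add t2).add t3
  simp only [sub_zero, add_zero] at tlo thi
  refine tendsto_of_tendsto_of_tendsto_of_le_of_le tlo thi (fun k => ?_) (fun k => ?_)
  · set F := {ω | rrD px py cx cy z (((U k ω, V k ω), (Lx k ω, Ly k ω)), ((a k, b k), (d k, e k))) ≤ 0}
    set BA := {ω | rrA px cx (U k ω) (Lx k ω) (d k) ≤ 1 / 2}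
    set BB := {ω | rrA py cy (V k ω) (Ly k ω) (e k) ≤ 1 / 2}
    have hsub : F ⊆ (S k ∪ BA) ∪ BB := by
      intro ω hω
      by_cases h1 : ω ∈ BA
      · exact Or.inl (Or.inr h1)
      by_cases h2 : ω ∈ BB
      · exact Or.inr h2
      exact Or.inl (Or.inl ((hS k ω (not_le.1 h1) (not_le.1 h2)).2 hω))
    have := measureReal_mono (μ := P) hsub
    have := measureReal_union_le (μ := P) (S k ∪ BA) BB
    have := measureReal_union_le (μ := P) (S k) BA
    change P.real F - P.real BA - P.real BB ≤ _
    linarith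
  · set F := {ω | rrD px py cx cy z (((U k ω, V k ω), (Lx k ω, Ly k ω)), ((a k, b k), (d k, e k))) ≤ 0}
    set BA := {ω | rrA px cx (U k ω) (Lx k ω) (d k) ≤ 1 / 2}
    set BB := {ω | rrA py cy (V k ω) (Ly k ω) (e k) ≤ 1 / 2}
    have hsub : S k ⊆ (F ∪ BA) ∪ BB := by
      intro ω hω
      by_cases h1 : ω ∈ BA
      · exact Or.inl (Or.inr h1)
      by_cases h2 : ω ∈ BB
      · exact Or.inr h2
      exact Or.inl (Or.inl ((hS k ω (not_le.1 h1) (not_le.1 h2)).1 hω))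
    have := measureReal_mono (μ := P) hsub
    have := measureReal_union_le (μ := P) (F ∪ BA) BB
    have := measureReal_union_le (μ := P) F BA
    change _ ≤ P.real F + P.real BA + P.real BB
    linarith

lemma rr_indep {Ω : Type*} [MeasurableSpace Ω] (P : Measure Ω) [IsProbabilityMeasure P]
    (X Y Lx Ly : Ω → ℝ) (f g : ℝ → ℝ) (hf : Measurable f) (hg : Measurable g)
    (hmX : Measurable X) (hmY : Measurable Y) (hmLx : Measurable Lx) (hmLy : Measurable Ly)
    (h : iIndepFun ![X, Y, Lx, Ly] P) :
    P.map (fun ω => ((f (X ω), g (Y ω)), (Lx ω, Ly ω))) =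
      ((P.map (fun ω => f (X ω))).prod (P.map (fun ω => g (Y ω)))).prod
        ((P.map Lx).prod (P.map Ly)) := by
  have hm : ∀ i, Measurable (![X, Y, Lx, Ly] i) := by
    intro i; fin_cases i <;> simpa
  have h1 : IndepFun (fun ω => (X ω, Y ω)) (fun ω => (Lx ω, Ly ω)) P :=
    h.indepFun_prodMk_prodMk hm 0 1 2 3 (by decide) (by decide) (by decide) (by decide)
  have h2 : IndepFun X Y P := h.indepFun (i := 0) (j := 1) (by decide)
  have h3 : IndepFun Lx Ly P := h.indepFun (i := 2) (j := 3) (by decide)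
  have h1' : IndepFun (fun ω => (f (X ω), g (Y ω))) (fun ω => (Lx ω, Ly ω)) P :=
    h1.comp (φ := Prod.map f g) (ψ := id) (hf.prodMap hg) measurable_id
  have h2' : IndepFun (fun ω => f (X ω)) (fun ω => g (Y ω)) P := h2.comp hf hg
  rw [(indepFun_iff_map_prod_eq_prod_map_map (by fun_prop) (by fun_prop)).1 h1',
    (indepFun_iff_map_prod_eq_prod_map_map (by fun_prop) (by fun_prop)).1 h2',
    (indepFun_iff_map_prod_eq_prod_map_map (by fun_prop) (by fun_prop)).1 h3]

lemma rr_alg (px py cx cy z nx ny rx ry s X Y l m : ℝ)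
    (hpx : px ∈ Set.Ioo (0 : ℝ) 1) (hpy : py ∈ Set.Ioo (0 : ℝ) 1)
    (hcx : 0 < cx) (hcx2 : cx ^ 2 = px * (1 - px)) (hcy : 0 < cy) (hcy2 : cy ^ 2 = py * (1 - py))
    (hrx : 0 < rx) (hry : 0 < ry) (hnx : nx = rx ^ 2) (hny : ny = ry ^ 2) (hs : 0 < s)
    (hA : 1 / 2 < rrA px cx (rx⁻¹ * cx⁻¹ * (X - nx * px)) l rx⁻¹)
    (hB : 1 / 2 < rrA py cy (ry⁻¹ * cy⁻¹ * (Y - ny * py)) m ry⁻¹) :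
    (|((X + l) / nx) / ((Y + m) / ny) - px / py| ≤
      z * (((X + l) / nx) / ((Y + m) / ny) *
        √(1 / (X + l) - 1 / nx + 1 / (Y + m) - 1 / ny))) ↔
    rrD px py cx cy z (((rx⁻¹ * cx⁻¹ * (X - nx * px), ry⁻¹ * cy⁻¹ * (Y - ny * py)), (l, m)),
      ((cx / px * rx⁻¹ / s, cy / py * ry⁻¹ / s), (rx⁻¹, ry⁻¹))) ≤ 0 := by
  have h1 : (0:ℝ) < 1 - px := by linarith [hpx.2]
  have h2 : (0:ℝ) < 1 - py := by linarith [hpy.2]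
  have h3 := hpx.1
  have h4 := hpy.1
  set A := rrA px cx (rx⁻¹ * cx⁻¹ * (X - nx * px)) l rx⁻¹ with hAdef
  set B := rrA py cy (ry⁻¹ * cy⁻¹ * (Y - ny * py)) m ry⁻¹ with hBdef
  have hA0 : 0 < A := by linarith
  have hB0 : 0 < B := by linarith
  have hX : X + l = nx * px * A := by
    rw [hAdef, rrA, hnx]; field_simp; ring
  have hY : Y + m = ny * py * B := by
    rw [hBdef, rrA, hny]; field_simp; ring
  refine rr_event_iff px py nx ny A B s (rrQ px py A B (cx / px * rx⁻¹ / s) (cy / py * ry⁻¹ / s)) _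
    z (X + l) (Y + m) h3 h4 (by rw [hnx]; positivity) (by rw [hny]; positivity) hA0 hB0 hs hX hY
    ?_ ?_
  · rw [hAdef, hBdef, rrA, rrA]
    field_simp
    ring
  · rw [rrQ, max_eq_left hA.le, max_eq_left hB.le, hX, hY, hnx, hny]
    simp only [div_pow, mul_pow, hcx2, hcy2]
    field_simp
    ring

/-- **Asymptotically valid confidence interval for the relative risk with the Laplace
mechanism.**  With `z = Φ⁻¹(1 − α/2)` and independent `Lap(2/ε)` noises added to the
binomial counts, the normal-approximation interval `p̃_k ± z·Ṽ_k` has asymptotic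
coverage `1 − α`. -/
theorem relative_risk_CI_valid_laplace {Ω : Type*} [MeasurableSpace Ω]
    (P : Measure Ω) [IsProbabilityMeasure P]
    (px py ε α z : ℝ) (hpx : px ∈ Set.Ioo (0 : ℝ) 1) (hpy : py ∈ Set.Ioo (0 : ℝ) 1)
    (hε : 0 < ε) (hα : α ∈ Set.Ioo (0 : ℝ) 1)
    (hz : cdf (gaussianReal 0 1) z = 1 - α / 2)
    (nx ny : ℕ → ℕ) (hnx : ∀ k, 0 < nx k) (hny : ∀ k, 0 < ny k)
    (hnxTop : Tendsto nx atTop atTop) (hnyTop : Tendsto ny atTop atTop)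
    (X Y Lx Ly : ℕ → Ω → ℝ)
    (hmX : ∀ k, Measurable (X k)) (hmY : ∀ k, Measurable (Y k))
    (hmLx : ∀ k, Measurable (Lx k)) (hmLy : ∀ k, Measurable (Ly k))
    (hlawX : ∀ k, Measure.map (X k) P = binomialReal (nx k) px hpx.2.le)
    (hlawY : ∀ k, Measure.map (Y k) P = binomialReal (ny k) py hpy.2.le)
    (hlawLx : ∀ k, Measure.map (Lx k) P = laplaceMeasure 0 (2 / ε))
    (hlawLy : ∀ k, Measure.map (Ly k) P = laplaceMeasure 0 (2 / ε))
    (hindep : ∀ k, iIndepFun ![X k, Y k, Lx k, Ly k] P) :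
    Tendsto
      (fun k =>
        (P {ω |
          |((X k ω + Lx k ω) / (nx k : ℝ)) / ((Y k ω + Ly k ω) / (ny k : ℝ)) - px / py| ≤
            z * (((X k ω + Lx k ω) / (nx k : ℝ)) / ((Y k ω + Ly k ω) / (ny k : ℝ)) *
              Real.sqrt (1 / (X k ω + Lx k ω) - 1 / (nx k : ℝ) +
                1 / (Y k ω + Ly k ω) - 1 / (ny k : ℝ)))}).toReal)
      atTop (nhds (1 - α)) := by
  have hx1 : (0:ℝ) < 1 - px := by linarith [hpx.2]
  have hy1 : (0:ℝ) < 1 - py := by linarith [hpy.2]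
  have hx0 := hpx.1
  have hy0 := hpy.1
  obtain ⟨cx, hcx, hcx2⟩ : ∃ c : ℝ, 0 < c ∧ c ^ 2 = px * (1 - px) :=
    ⟨√(px * (1 - px)), Real.sqrt_pos.2 (by positivity), Real.sq_sqrt (by positivity)⟩
  obtain ⟨cy, hcy, hcy2⟩ : ∃ c : ℝ, 0 < c ∧ c ^ 2 = py * (1 - py) :=
    ⟨√(py * (1 - py)), Real.sqrt_pos.2 (by positivity), Real.sq_sqrt (by positivity)⟩
  have hΛ : IsProbabilityMeasure (laplaceMeasure 0 (2 / ε)) := by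
    rw [← hlawLx 0]
    exact Measure.isProbabilityMeasure_map (hmLx 0).aemeasurable
  have hrx : ∀ k, 0 < √(nx k : ℝ) := fun k => Real.sqrt_pos.2 (by exact_mod_cast hnx k)
  have hry : ∀ k, 0 < √(ny k : ℝ) := fun k => Real.sqrt_pos.2 (by exact_mod_cast hny k)
  let U : ℕ → Ω → ℝ := fun k ω => (√(nx k))⁻¹ * cx⁻¹ * (X k ω - nx k * px)
  let V : ℕ → Ω → ℝ := fun k ω => (√(ny k))⁻¹ * cy⁻¹ * (Y k ω - ny k * py)
  have hmU : ∀ k, Measurable (U k) := fun k => by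
    have := hmX k
    fun_prop
  have hmV : ∀ k, Measurable (V k) := fun k => by
    have := hmY k
    fun_prop
  have hJ := rr_joint P (laplaceMeasure 0 (2 / ε)) U V Lx Ly hmU hmV hmLx hmLy
    (rr_clt P px cx hpx hcx hcx2 nx hnxTop X hmX hlawX)
    (rr_clt P py cy hpy hcy hcy2 ny hnyTop Y hmY hlawY) hlawLx hlawLy
    (fun k => rr_indep P (X k) (Y k) (Lx k) (Ly k)
      (fun x => (√(nx k))⁻¹ * cx⁻¹ * (x - nx k * px))
      (fun x => (√(ny k))⁻¹ * cy⁻¹ * (x - ny k * py)) (by fun_prop) (by fun_prop)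
      (hmX k) (hmY k) (hmLx k) (hmLy k) (hindep k))
  have hinv : ∀ n : ℕ → ℕ, Tendsto n atTop atTop →
      Tendsto (fun k => (√(n k : ℝ))⁻¹) atTop (nhds 0) := fun n hn =>
    tendsto_inv_atTop_zero.comp (Real.tendsto_sqrt_atTop.comp
      (tendsto_natCast_atTop_atTop.comp hn))
  let s : ℕ → ℝ := fun k => √((cx / px * (√(nx k))⁻¹) ^ 2 + (cy / py * (√(ny k))⁻¹) ^ 2)
  have hpos : ∀ k, 0 < (cx / px * (√(nx k))⁻¹) ^ 2 + (cy / py * (√(ny k))⁻¹) ^ 2 := fun k => by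
    have := hrx k
    have := hry k
    positivity
  have hs : ∀ k, 0 < s k := fun k => Real.sqrt_pos.2 (hpos k)
  let a : ℕ → ℝ := fun k => cx / px * (√(nx k))⁻¹ / s k
  let b : ℕ → ℝ := fun k => cy / py * (√(ny k))⁻¹ / s k
  have hab : ∀ k, a k ^ 2 + b k ^ 2 = 1 := fun k => by
    simp only [a, b, div_pow _ (s k)]
    rw [← add_div, div_eq_one_iff_eq (pow_pos (hs k) 2).ne']
    exact (Real.sq_sqrt (hpos k).le).symm
  have hmem : ∀ k, (a k, b k) ∈ Set.Icc (-1 : ℝ) 1 ×ˢ Set.Icc (-1 : ℝ) 1 := fun k => by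
    have := hab k
    refine ⟨abs_le.1 (abs_le_one_iff_mul_self_le_one.2 ?_),
      abs_le.1 (abs_le_one_iff_mul_self_le_one.2 ?_)⟩ <;> simp only
    · nlinarith [sq_nonneg (b k)]
    · nlinarith [sq_nonneg (a k)]
  refine tendsto_of_subseq_tendsto fun ns hns => ?_
  obtain ⟨q, -, ms, hms, hconv⟩ := (isCompact_Icc.prod isCompact_Icc).tendsto_subseq
    (x := fun n => (a (ns n), b (ns n))) (fun n => hmem (ns n))
  refine ⟨ms, ?_⟩
  have hsub : Tendsto (fun m => ns (ms m)) atTop atTop := hns.comp hms.tendsto_atTop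
  refine rr_core P (laplaceMeasure 0 (2 / ε)) (fun m => U (ns (ms m))) (fun m => V (ns (ms m)))
    (fun m => Lx (ns (ms m))) (fun m => Ly (ns (ms m))) (fun m => hmU _) (fun m => hmV _)
    (fun m => hmLx _) (fun m => hmLy _)
    ⟨fun m => hJ.forall_aemeasurable _, hJ.aemeasurable_limit, hJ.tendsto.comp hsub⟩
    px py cx cy z α hpx hpy hα hz (fun m => a (ns (ms m))) (fun m => b (ns (ms m)))
    (fun m => (√(nx (ns (ms m)) : ℝ))⁻¹) (fun m => (√(ny (ns (ms m)) : ℝ))⁻¹) q.1 q.2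
    (fun m => hab _) ((continuous_fst.tendsto q).comp hconv)
    ((continuous_snd.tendsto q).comp hconv)
    (hinv _ (hnxTop.comp hsub)) (hinv _ (hnyTop.comp hsub)) _ ?_
  intro m ω hA hB
  exact rr_alg px py cx cy z _ _ _ _ (s (ns (ms m))) _ _ _ _ hpx hpy hcx hcx2 hcy hcy2 (hrx _) (hry _)
    (Real.sq_sqrt (by positivity)).symm (Real.sq_sqrt (by positivity)).symm (hs _) hA hB
end

section
/- Let n_x ≥ 1 and n_y ≥ 2 be natural numbers. Consider all quadruples of natural numbers (X, Y, X', Y') with 1 ≤ X, X' ≤ n_x and 1 ≤ Y, Y' ≤ n_y such that either (Y' = Y and |X − X'| = 1) or (X' = X and |Y − Y'| = 1). Then the maximum over all such quadruples of |X/Y − X'/Y'| equals n_x/2, attained at X = X' = n_x, Y = 1, Y' = 2. (This is the global sensitivity of the ratio statistic X/Y over frequency tables in which one count changes by one.) -/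
theorem ratio_step (x y : ℕ) (hy : 1 ≤ y) :
    |(x : ℝ) / (y : ℝ) - (x : ℝ) / ((y + 1 : ℕ) : ℝ)| ≤ (x : ℝ) / 2 := by
  have hy' : (1 : ℝ) ≤ y := by exact_mod_cast hy
  have e : (x : ℝ) / (y : ℝ) - (x : ℝ) / ((y + 1 : ℕ) : ℝ) = x / (y * (y + 1)) := by
    push_cast
    have : (y : ℝ) ≠ 0 := by linarith
    have : (y : ℝ) + 1 ≠ 0 := by linarith
    field_simp
    ring
  rw [e, abs_of_nonneg (by positivity)]
  exact div_le_div_of_nonneg_left (by positivity) (by norm_num) (by nlinarith)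

/-- **Global sensitivity of the ratio statistic.**  Over quadruples of counts
`(X, Y, X', Y')` with `1 ≤ X, X' ≤ n_x`, `1 ≤ Y, Y' ≤ n_y` in which exactly one
count changes by one, the maximum of `|X/Y − X'/Y'|` equals `n_x / 2`, attained at
`X = X' = n_x`, `Y = 1`, `Y' = 2`. -/
theorem ratio_global_sensitivity (nx ny : ℕ) (hnx : 1 ≤ nx) (hny : 2 ≤ ny) :
    IsGreatest
      {v : ℝ | ∃ X Y X' Y' : ℕ,
        1 ≤ X ∧ X ≤ nx ∧ 1 ≤ X' ∧ X' ≤ nx ∧ 1 ≤ Y ∧ Y ≤ ny ∧ 1 ≤ Y' ∧ Y' ≤ ny ∧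
        ((Y' = Y ∧ |(X : ℤ) - (X' : ℤ)| = 1) ∨ (X' = X ∧ |(Y : ℤ) - (Y' : ℤ)| = 1)) ∧
        v = |(X : ℝ) / (Y : ℝ) - (X' : ℝ) / (Y' : ℝ)|}
      ((nx : ℝ) / 2) ∧
    |(nx : ℝ) / 1 - (nx : ℝ) / 2| = (nx : ℝ) / 2 := by
  have h2 : |(nx : ℝ) / 1 - (nx : ℝ) / 2| = (nx : ℝ) / 2 := by
    have h0 : (0 : ℝ) ≤ (nx : ℝ) / 2 := by positivity
    rw [show (nx : ℝ) / 1 - (nx : ℝ) / 2 = (nx : ℝ) / 2 by ring, abs_of_nonneg h0]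
  refine ⟨⟨?_, ?_⟩, h2⟩
  · refine ⟨nx, 1, nx, 2, hnx, le_rfl, hnx, le_rfl, le_rfl, by omega, by omega, hny,
      Or.inr ⟨rfl, by norm_num⟩, ?_⟩
    rw [← h2]
    norm_num
  · rintro v ⟨X, Y, X', Y', hX, hXn, hX', hXn', hY, hYn, hY', hYn', h, rfl⟩
    rcases h with ⟨rfl, h⟩ | ⟨rfl, h⟩
    · have hn : (2 : ℝ) ≤ nx := by
        have : 2 ≤ nx := by
          rcases (abs_eq (by norm_num)).1 h with h | h <;> omega
        exact_mod_cast this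
      have hy : (1 : ℝ) ≤ Y' := by exact_mod_cast hY
      have h' : |(X : ℝ) - (X' : ℝ)| = 1 := by exact_mod_cast h
      rw [← sub_div, abs_div, h', abs_of_pos (by linarith : (0 : ℝ) < Y')]
      have : 1 / (Y' : ℝ) ≤ 1 := by
        rw [div_le_one (by linarith)]
        exact hy
      linarith
    · have hx : (X' : ℝ) ≤ nx := by exact_mod_cast hXn
      rcases (abs_eq (by norm_num)).1 h with h | h
      · obtain rfl : Y = Y' + 1 := by omega
        rw [abs_sub_comm]
        exact (ratio_step X' Y' hY').trans (by linarith)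
      · obtain rfl : Y' = Y + 1 := by omega
        exact (ratio_step X' Y hY).trans (by linarith)
end

section
/- Let ε > 0 and let L ~ Lap(log(2)/ε). Let X, Y, X', Y' be natural numbers, all at least 1, such that either (Y' = Y and |X − X'| ≤ 1) or (X' = X and |Y − Y'| ≤ 1). Then for every Borel set E ⊆ ℝ, P((X/Y)·e^L ∈ E) ≤ e^ε · P((X'/Y')·e^L ∈ E). (This is the (ε,0)-differential-privacy guarantee of the NoisedLog mechanism, which perturbs log(X) − log(Y), whose sensitivity over such neighboring counts is at most log 2, with Laplace noise and exponentiates.) -/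
open MeasureTheory ProbabilityTheory Filter

lemma laplace_shift (ε : ℝ) (hε : 0 < ε) (d : ℝ) (hd : |d| ≤ Real.log 2) (S T : Set ℝ)
    (hS : MeasurableSet S) (hT : MeasurableSet T) (hST : ∀ l, l ∈ S → l + d ∈ T) :
    laplaceMeasure 0 (Real.log 2 / ε) S ≤
      ENNReal.ofReal (Real.exp ε) * laplaceMeasure 0 (Real.log 2 / ε) T := by
  have h2 : 0 < Real.log 2 := Real.log_pos one_lt_two
  unfold laplaceMeasure
  rw [withDensity_apply _ hS, withDensity_apply _ hT, ← lintegral_indicator hS,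
    ← lintegral_indicator hT, ← lintegral_add_right_eq_self (T.indicator _) d,
    ← lintegral_const_mul' _ _ ENNReal.ofReal_ne_top]
  apply lintegral_mono
  intro l
  by_cases hl : l ∈ S
  · simp only [Set.indicator_of_mem hl, Set.indicator_of_mem (hST l hl), sub_zero]
    rw [← ENNReal.ofReal_mul (Real.exp_pos _).le]
    apply ENNReal.ofReal_le_ofReal
    rw [mul_left_comm, ← Real.exp_add]
    apply mul_le_mul_of_nonneg_left _ (by positivity)
    apply Real.exp_le_exp.2
    have h3 : |l + d| ≤ |l| + Real.log 2 := (abs_add_le l d).trans (by linarith)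
    have h4 : |l + d| / (Real.log 2 / ε) ≤ (|l| + Real.log 2) / (Real.log 2 / ε) := by gcongr
    have h5 : Real.log 2 / (Real.log 2 / ε) = ε := by field_simp
    rw [add_div, h5] at h4
    rw [neg_div, neg_div]
    linarith
  · simp [Set.indicator_of_notMem hl]

lemma log_nbr (a b : ℕ) (ha : 1 ≤ a) (hb : 1 ≤ b) (h : |(a : ℤ) - (b : ℤ)| ≤ 1) :
    |Real.log a - Real.log b| ≤ Real.log 2 := by
  have key : ∀ a b : ℕ, 1 ≤ a → 1 ≤ b → a ≤ 2 * b → Real.log a ≤ Real.log 2 + Real.log b := by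
    intro a b ha hb hab
    have hb' : (b : ℝ) ≠ 0 := by positivity
    rw [← Real.log_mul two_ne_zero hb']
    apply Real.log_le_log (by positivity)
    exact_mod_cast hab
  rw [abs_le] at h ⊢
  have h1 := key a b ha hb (by omega)
  have h2 := key b a hb ha (by omega)
  constructor <;> linarith

/-- **(ε,0)-differential privacy of the `NoisedLog` mechanism**, which perturbs
`log X − log Y` (of sensitivity at most `log 2` over neighboring counts that stay at
least `1`) with `Lap(log 2 / ε)` noise and exponentiates, outputting `(X/Y)·e^L`. -/
theorem noisedLog_DP {Ω : Type*} [MeasurableSpace Ω]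
    (P : Measure Ω) [IsProbabilityMeasure P]
    (ε : ℝ) (hε : 0 < ε) (L : Ω → ℝ) (hm : Measurable L)
    (hlaw : Measure.map L P = laplaceMeasure 0 (Real.log 2 / ε)) :
    ∀ X Y X' Y' : ℕ, 1 ≤ X → 1 ≤ Y → 1 ≤ X' → 1 ≤ Y' →
      ((Y' = Y ∧ |(X : ℤ) - (X' : ℤ)| ≤ 1) ∨ (X' = X ∧ |(Y : ℤ) - (Y' : ℤ)| ≤ 1)) →
      ∀ E : Set ℝ, MeasurableSet E →
        P {ω | ((X : ℝ) / (Y : ℝ)) * Real.exp (L ω) ∈ E} ≤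
          ENNReal.ofReal (Real.exp ε) *
            P {ω | ((X' : ℝ) / (Y' : ℝ)) * Real.exp (L ω) ∈ E} := by
  intro X Y X' Y' hX hY hX' hY' h E hE
  have x0 : (0 : ℝ) < X := by exact_mod_cast hX
  have y0 : (0 : ℝ) < Y := by exact_mod_cast hY
  have x0' : (0 : ℝ) < X' := by exact_mod_cast hX'
  have y0' : (0 : ℝ) < Y' := by exact_mod_cast hY'
  have hmeas : ∀ c : ℝ, MeasurableSet {l : ℝ | c * Real.exp l ∈ E} := fun c =>
    (show Measurable (fun l : ℝ => c * Real.exp l) by fun_prop) hE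
  have hP : ∀ c : ℝ, P {ω | c * Real.exp (L ω) ∈ E} =
      laplaceMeasure 0 (Real.log 2 / ε) {l : ℝ | c * Real.exp l ∈ E} := by
    intro c
    rw [← hlaw, Measure.map_apply hm (hmeas c)]
    rfl
  rw [hP, hP]
  refine laplace_shift ε hε
    ((Real.log X - Real.log X') - (Real.log Y - Real.log Y')) ?_ _ _ (hmeas _) (hmeas _) ?_
  · rcases h with ⟨rfl, h⟩ | ⟨rfl, h⟩
    · simpa using log_nbr X X' hX hX' h
    · rw [sub_self, zero_sub, abs_neg]
      exact log_nbr Y Y' hY hY' h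
  · intro l hl
    simp only [Set.mem_setOf_eq] at hl ⊢
    convert hl using 1
    rw [Real.exp_add, Real.exp_sub, Real.exp_sub, Real.exp_sub, Real.exp_log x0, Real.exp_log y0,
      Real.exp_log x0', Real.exp_log y0']
    field_simp
end
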